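/- Let S be a connected quasi-hereditary algebra with a simple-preserving duality whose partial order is minimal for the quasi-hereditary structure. If S satisfies property C (wfd(∇(λ)) = gfd(S) − inj(∇(λ)) for all λ), then property B (μ < λ implies wfd(∇(μ)) ≤ wfd(∇(λ))) holds if and only if property E (μ < λ implies inj(∇(μ)) ≥ inj(∇(λ))) holds. -/

import Mathlib

/-!
Common definitions for formalizing "On the global and ∇-filtration dimensions of
quasi-hereditary algebras" by Erdmann and Parker.

We work with a finite-dimensional algebra `S` over a field `k`; since `S` is
finite dimensional over `k`, the finite-dimensional `S`-modules are exactly the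
finitely generated ones, so we express finite-dimensionality of a module `M` as
`Module.Finite S M`.
-/

open CategoryTheory

namespace QHPaper

variable (S : Type) [Ring S]

/-- The subquotient `B ⧸ A` associated to two submodules `A B` of `M`. -/
abbrev subquot {M : ModuleCat.{0} S} (A B : Submodule S ↥M) : Type :=
  ↥B ⧸ (Submodule.comap B.subtype A)

/-- A filtration `⊥ = f 0 ≤ f 1 ≤ ⋯ ≤ f n = ⊤` of `M` whose `i`-th section
`f (i+1) / f i` is isomorphic to the prescribed module `D i`. -/
def HasFiltrationWithSections (M : ModuleCat.{0} S) (n : ℕ)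
    (f : Fin (n + 1) → Submodule S ↥M) (D : Fin n → ModuleCat.{0} S) : Prop :=
  Monotone f ∧ f 0 = ⊥ ∧ f (Fin.last n) = ⊤ ∧
    ∀ i : Fin n, Nonempty ((subquot S (f i.castSucc) (f i.succ)) ≃ₗ[S] ↥(D i))

/-- `L` occurs as a (simple) subquotient of `M`; for `L` simple this says that `L`
is a composition factor of `M`. -/
def IsCompFactor (L M : ModuleCat.{0} S) : Prop :=
  ∃ (A B : Submodule S ↥M), A ≤ B ∧ Nonempty ((subquot S A B) ≃ₗ[S] ↥L)

/-- `L` occurs with multiplicity `m` among the sections of a composition series of `M`. -/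
def CompFactorMult (L M : ModuleCat.{0} S) (m : ℕ) : Prop :=
  ∃ (n : ℕ) (f : Fin (n + 1) → Submodule S ↥M),
    Monotone f ∧ f 0 = ⊥ ∧ f (Fin.last n) = ⊤ ∧
    (∀ i : Fin n, IsSimpleModule S (subquot S (f i.castSucc) (f i.succ))) ∧
    Nat.card {i : Fin n // Nonempty ((subquot S (f i.castSucc) (f i.succ)) ≃ₗ[S] ↥L)} = m

/-- `P` is a projective cover of `M`: `P` is projective and there is a surjection
`P → M` whose kernel is superfluous in `P`. -/
def IsProjCover (P M : ModuleCat.{0} S) : Prop :=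
  Module.Projective S ↥P ∧ ∃ π : ↥P →ₗ[S] ↥M, Function.Surjective π ∧
    ∀ N : Submodule S ↥P, N ⊔ LinearMap.ker π = ⊤ → N = ⊤

/-- `I` is an injective hull of `M`: `I` is injective and there is an injection
`M → I` with essential image. -/
def IsInjHull (I M : ModuleCat.{0} S) : Prop :=
  Module.Injective S ↥I ∧ ∃ ι : ↥M →ₗ[S] ↥I, Function.Injective ι ∧
    ∀ N : Submodule S ↥I, N ⊓ LinearMap.range ι = ⊥ → N = ⊥

/-- The data of a quasi-hereditary algebra structure on `S` with weight poset `Λ`: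
a full set `L` of pairwise non-isomorphic simple modules, their projective covers `P`
and injective hulls `I`, the standard modules `std` (largest quotient of `P lam` with
all composition factors `L mu`, `mu ≤ lam`), the costandard modules `costd`
(largest submodule of `I lam` with all composition factors `L mu`, `mu ≤ lam`),
such that `L lam` occurs exactly once in `std lam` and `P lam` is filtered by
standard modules `std mu` with `mu ≥ lam`, with `std lam` occurring exactly once. -/
structure QHData (Λ : Type) [Fintype Λ] [PartialOrder Λ] where
  L : Λ → ModuleCat.{0} S
  P : Λ → ModuleCat.{0} S
  I : Λ → ModuleCat.{0} S
  std : Λ → ModuleCat.{0} S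
  costd : Λ → ModuleCat.{0} S
  finiteL : ∀ lam, Module.Finite S ↥(L lam)
  simpleL : ∀ lam, IsSimpleModule S ↥(L lam)
  nonisoL : ∀ lam mu, lam ≠ mu → IsEmpty (↥(L lam) ≃ₗ[S] ↥(L mu))
  fullL : ∀ M : ModuleCat.{0} S, IsSimpleModule S ↥M → ∃ lam, Nonempty (↥M ≃ₗ[S] ↥(L lam))
  projCover : ∀ lam, IsProjCover S (P lam) (L lam)
  injHull : ∀ lam, IsInjHull S (I lam) (L lam)
  stdSpec : ∀ lam, ∃ K : Submodule S ↥(P lam),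
    Nonempty (↥(std lam) ≃ₗ[S] (↥(P lam) ⧸ K)) ∧
    (∀ mu, IsCompFactor S (L mu) (ModuleCat.of S (↥(P lam) ⧸ K)) → mu ≤ lam) ∧
    ∀ K' : Submodule S ↥(P lam),
      (∀ mu, IsCompFactor S (L mu) (ModuleCat.of S (↥(P lam) ⧸ K')) → mu ≤ lam) → K ≤ K'
  costdSpec : ∀ lam, ∃ V : Submodule S ↥(I lam),
    Nonempty (↥(costd lam) ≃ₗ[S] ↥V) ∧
    (∀ mu, IsCompFactor S (L mu) (ModuleCat.of S ↥V) → mu ≤ lam) ∧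
    ∀ V' : Submodule S ↥(I lam),
      (∀ mu, IsCompFactor S (L mu) (ModuleCat.of S ↥V') → mu ≤ lam) → V' ≤ V
  multOne : ∀ lam, CompFactorMult S (L lam) (std lam) 1
  projFilt : ∀ lam, ∃ (n : ℕ) (f : Fin (n + 1) → Submodule S ↥(P lam)) (g : Fin n → Λ),
    HasFiltrationWithSections S (P lam) n f (fun i => std (g i)) ∧
    (∀ i, lam ≤ g i) ∧ Nat.card {i : Fin n // g i = lam} = 1

variable {Λ : Type} [Fintype Λ] [PartialOrder Λ]

/-- `M` has a filtration with costandard sections, i.e. `M ∈ F(∇)`. -/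
def InCostdFilt (Q : QHData S Λ) (M : ModuleCat.{0} S) : Prop :=
  ∃ (n : ℕ) (f : Fin (n + 1) → Submodule S ↥M) (g : Fin n → Λ),
    HasFiltrationWithSections S M n f (fun i => Q.costd (g i))

/-- `M` has a filtration with standard sections, i.e. `M ∈ F(Δ)`. -/
def InStdFilt (Q : QHData S Λ) (M : ModuleCat.{0} S) : Prop :=
  ∃ (n : ℕ) (f : Fin (n + 1) → Submodule S ↥M) (g : Fin n → Λ),
    HasFiltrationWithSections S M n f (fun i => Q.std (g i))

/-- `0 → N 0 → N 1 → ⋯ → N (n+1) → 0` is exact. -/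
def IsExactSeq (n : ℕ) (N : Fin (n + 2) → ModuleCat.{0} S)
    (f : ∀ i : Fin (n + 1), ↥(N i.castSucc) →ₗ[S] ↥(N i.succ)) : Prop :=
  Function.Injective (f 0) ∧ Function.Surjective (f (Fin.last n)) ∧
    ∀ i : Fin n, LinearMap.range (f i.castSucc) = LinearMap.ker (f i.succ)

/-- `M` has a ∇-resolution (co-resolution by modules in `F(∇)`) of length `d`:
`0 → M → M₀ → ⋯ → M_d → 0` with each `Mᵢ ∈ F(∇)`. -/
def GfdLE (Q : QHData S Λ) (M : ModuleCat.{0} S) (d : ℕ) : Prop :=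
  ∃ (N : Fin (d + 2) → ModuleCat.{0} S)
    (f : ∀ i : Fin (d + 1), ↥(N i.castSucc) →ₗ[S] ↥(N i.succ)),
    IsExactSeq S d N f ∧ N 0 = M ∧ ∀ i : Fin (d + 1), InCostdFilt S Q (N i.succ)

/-- The ∇-filtration dimension (good filtration dimension) of a module. -/
noncomputable def gfd (Q : QHData S Λ) (M : ModuleCat.{0} S) : ℕ :=
  sInf {d | GfdLE S Q M d}

/-- `M` has a resolution `0 → M_d → ⋯ → M₀ → M → 0` with each `Mᵢ ∈ F(Δ)`. -/
def WfdLE (Q : QHData S Λ) (M : ModuleCat.{0} S) (d : ℕ) : Prop :=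
  ∃ (N : Fin (d + 2) → ModuleCat.{0} S)
    (f : ∀ i : Fin (d + 1), ↥(N i.castSucc) →ₗ[S] ↥(N i.succ)),
    IsExactSeq S d N f ∧ N (Fin.last (d + 1)) = M ∧
    ∀ i : Fin (d + 1), InStdFilt S Q (N i.castSucc)

/-- The Δ-filtration dimension of a module. -/
noncomputable def wfd (Q : QHData S Λ) (M : ModuleCat.{0} S) : ℕ :=
  sInf {d | WfdLE S Q M d}

/-- `M` has a projective resolution of length `d`. -/
def ProjdimLE (M : ModuleCat.{0} S) (d : ℕ) : Prop :=
  ∃ (N : Fin (d + 2) → ModuleCat.{0} S)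
    (f : ∀ i : Fin (d + 1), ↥(N i.castSucc) →ₗ[S] ↥(N i.succ)),
    IsExactSeq S d N f ∧ N (Fin.last (d + 1)) = M ∧
    ∀ i : Fin (d + 1), Module.Projective S ↥(N i.castSucc)

/-- The projective dimension of a module. -/
noncomputable def projdim (M : ModuleCat.{0} S) : ℕ :=
  sInf {d | ProjdimLE S M d}

/-- `M` has an injective resolution of length `d`. -/
def InjdimLE (M : ModuleCat.{0} S) (d : ℕ) : Prop :=
  ∃ (N : Fin (d + 2) → ModuleCat.{0} S)
    (f : ∀ i : Fin (d + 1), ↥(N i.castSucc) →ₗ[S] ↥(N i.succ)),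
    IsExactSeq S d N f ∧ N 0 = M ∧
    ∀ i : Fin (d + 1), Module.Injective S ↥(N i.succ)

/-- The injective dimension of a module. -/
noncomputable def injdim (M : ModuleCat.{0} S) : ℕ :=
  sInf {d | InjdimLE S M d}

/-- `gfd(S)`: the supremum of the ∇-filtration dimensions of all
finite-dimensional `S`-modules. -/
noncomputable def gfdAlg (Q : QHData S Λ) : ℕ :=
  sSup {d | ∃ M : ModuleCat.{0} S, Module.Finite S ↥M ∧ gfd S Q M = d}

/-- `wfd(S)`: the supremum of the Δ-filtration dimensions of all
finite-dimensional `S`-modules. -/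
noncomputable def wfdAlg (Q : QHData S Λ) : ℕ :=
  sSup {d | ∃ M : ModuleCat.{0} S, Module.Finite S ↥M ∧ wfd S Q M = d}

/-- The global dimension of `S`: the supremum of the projective dimensions of all
finite-dimensional `S`-modules. -/
noncomputable def globdim : ℕ :=
  sSup {d | ∃ M : ModuleCat.{0} S, Module.Finite S ↥M ∧ projdim S M = d}

/-- `Ext^n_S(A, B) ≠ 0`. -/
noncomputable def extNe (A B : ModuleCat.{0} S) (n : ℕ) : Prop :=
  Nontrivial ↥(((Ext ℤ (ModuleCat.{0} S) n).obj (Opposite.op A)).obj B)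

/-- A simple-preserving duality on `S`: a contravariant, exact, fully faithful,
additive self-functor `D` on the category of finite-dimensional `S`-modules with
`D (D M) ≅ M` and `D (L lam) ≅ L lam` for all `lam`. -/
structure Duality (Q : QHData S Λ) where
  D : ModuleCat.{0} S → ModuleCat.{0} S
  Dmap : ∀ {A B : ModuleCat.{0} S}, (↥A →ₗ[S] ↥B) → (↥(D B) →ₗ[S] ↥(D A))
  finD : ∀ M : ModuleCat.{0} S, Module.Finite S ↥M → Module.Finite S ↥(D M)
  Did : ∀ A : ModuleCat.{0} S, Module.Finite S ↥A →
    Dmap (LinearMap.id : ↥A →ₗ[S] ↥A) = LinearMap.id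
  Dcomp : ∀ {A B C : ModuleCat.{0} S}, Module.Finite S ↥A → Module.Finite S ↥B →
    Module.Finite S ↥C → ∀ (f : ↥A →ₗ[S] ↥B) (g : ↥B →ₗ[S] ↥C),
      Dmap (g ∘ₗ f) = Dmap f ∘ₗ Dmap g
  Dadd : ∀ {A B : ModuleCat.{0} S}, Module.Finite S ↥A → Module.Finite S ↥B →
    ∀ (f g : ↥A →ₗ[S] ↥B), Dmap (f + g) = Dmap f + Dmap g
  Dfull : ∀ {A B : ModuleCat.{0} S}, Module.Finite S ↥A → Module.Finite S ↥B →
    Function.Bijective (fun f : ↥A →ₗ[S] ↥B => Dmap f)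
  Dexact : ∀ {A B C : ModuleCat.{0} S}, Module.Finite S ↥A → Module.Finite S ↥B →
    Module.Finite S ↥C → ∀ (f : ↥A →ₗ[S] ↥B) (g : ↥B →ₗ[S] ↥C),
      Function.Injective f → Function.Surjective g →
      LinearMap.range f = LinearMap.ker g →
      Function.Injective (Dmap g) ∧ Function.Surjective (Dmap f) ∧
        LinearMap.range (Dmap g) = LinearMap.ker (Dmap f)
  Dinvol : ∀ M : ModuleCat.{0} S, Module.Finite S ↥M → Nonempty (↥(D (D M)) ≃ₗ[S] ↥M)
  DL : ∀ lam, Nonempty (↥(D (Q.L lam)) ≃ₗ[S] ↥(Q.L lam))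

/-- Strong property A: `mu < lam` implies `gfd (L mu) < gfd (L lam)`. -/
def StrongPropA (Q : QHData S Λ) : Prop :=
  ∀ mu lam : Λ, mu < lam → gfd S Q (Q.L mu) < gfd S Q (Q.L lam)

/-- Property A: `mu < lam` implies `gfd (L mu) ≤ gfd (L lam)`. -/
def PropA (Q : QHData S Λ) : Prop :=
  ∀ mu lam : Λ, mu < lam → gfd S Q (Q.L mu) ≤ gfd S Q (Q.L lam)

/-- Property B: `mu < lam` implies `wfd (∇ mu) ≤ wfd (∇ lam)`. -/
def PropB (Q : QHData S Λ) : Prop :=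
  ∀ mu lam : Λ, mu < lam → wfd S Q (Q.costd mu) ≤ wfd S Q (Q.costd lam)

/-- Property C: `wfd (∇ lam) = gfd S - inj (∇ lam)` for all `lam`. -/
def PropC (Q : QHData S Λ) : Prop :=
  ∀ lam : Λ, wfd S Q (Q.costd lam) = gfdAlg S Q - injdim S (Q.costd lam)

/-- Property D: `wfd (∇ lam) = wfd (L lam)` for all `lam`. -/
def PropD (Q : QHData S Λ) : Prop :=
  ∀ lam : Λ, wfd S Q (Q.costd lam) = wfd S Q (Q.L lam)

/-- Property E: `mu < lam` implies `inj (∇ mu) ≥ inj (∇ lam)`. -/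
def PropE (Q : QHData S Λ) : Prop :=
  ∀ mu lam : Λ, mu < lam → injdim S (Q.costd lam) ≤ injdim S (Q.costd mu)

/-- The partial order is minimal for the quasi-hereditary structure: whenever
`mu < lam` are adjacent, `L mu` is a composition factor of `Δ lam` or of `∇ lam`. -/
def MinimalOrder (Q : QHData S Λ) : Prop :=
  ∀ mu lam : Λ, mu < lam → (¬ ∃ nu, mu < nu ∧ nu < lam) →
    IsCompFactor S (Q.L mu) (Q.std lam) ∨ IsCompFactor S (Q.L mu) (Q.costd lam)

/-- `S` is connected (indecomposable as an algebra, i.e. one block): the only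
central idempotents are `0` and `1`. -/
def ConnectedRing : Prop :=
  ∀ c : S, c * c = c → (∀ s : S, c * s = s * c) → c = 0 ∨ c = 1

/-- A tilting module: a module in `F(Δ) ∩ F(∇)`. -/
def IsTilting (Q : QHData S Λ) (T : ModuleCat.{0} S) : Prop :=
  InStdFilt S Q T ∧ InCostdFilt S Q T

/-- The indecomposable tilting module `T(lam)`: an indecomposable tilting module in
which `L lam` occurs exactly once and all other composition factors `L mu` have
`mu < lam`. -/
def IsIndecTilting (Q : QHData S Λ) (lam : Λ) (T : ModuleCat.{0} S) : Prop :=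
  IsTilting S Q T ∧ Nontrivial ↥T ∧
    (∀ A B : Submodule S ↥T, IsCompl A B → A = ⊥ ∨ B = ⊥) ∧
    CompFactorMult S (Q.L lam) T 1 ∧
    ∀ mu, IsCompFactor S (Q.L mu) T → mu = lam ∨ mu < lam

/-- A full tilting module: a (finite-dimensional) tilting module having every
indecomposable tilting module as a direct summand. -/
def IsFullTilting (Q : QHData S Λ) (T : ModuleCat.{0} S) : Prop :=
  IsTilting S Q T ∧ Module.Finite S ↥T ∧
    ∀ (lam : Λ) (Tl : ModuleCat.{0} S), IsIndecTilting S Q lam Tl →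
      ∃ Cc : ModuleCat.{0} S, Nonempty (↥T ≃ₗ[S] (↥Tl × ↥Cc))

/-- The Ringel dual ring `S' = End_S(T)^op`. -/
abbrev RingelDualRing (T : ModuleCat.{0} S) : Type := (Module.End S ↥T)ᵐᵒᵖ

/-- `Hom_S(T, X)` is a module over `S' = End_S(T)^op` via `f • φ = φ ∘ f`. -/
instance homTModule (T X : ModuleCat.{0} S) :
    Module (RingelDualRing S T) (↥T →ₗ[S] ↥X) where
  smul a φ := φ ∘ₗ a.unop
  one_smul φ := rfl
  mul_smul a b φ := rfl
  smul_zero a := rfl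
  smul_add a φ ψ := rfl
  add_smul a b φ := by
    ext x
    show φ ((a.unop + b.unop) x) = φ (a.unop x) + φ (b.unop x)
    rw [LinearMap.add_apply, map_add]
  zero_smul φ := by
    ext x
    show φ ((0 : Module.End S ↥T) x) = 0
    rw [LinearMap.zero_apply, map_zero]

/-- The `S'`-module `Hom_S(T, X)`, i.e. the image of `X` under the functor
`F = Hom_S(T, -)`. -/
noncomputable def homTMod (T X : ModuleCat.{0} S) :
    ModuleCat.{0} (RingelDualRing S T) :=
  ModuleCat.of (RingelDualRing S T) (↥T →ₗ[S] ↥X)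

/-- `Q'` is a Ringel dual quasi-hereditary structure for `(Q, T)`:
`T` is a full tilting module, `Q'` is a quasi-hereditary structure on
`S' = End_S(T)^op` for the opposite poset, and its standard modules are
`Δ'(lam) = Hom_S(T, ∇(lam))`. -/
def IsRingelDualData (Q : QHData S Λ) (T : ModuleCat.{0} S)
    (Q' : QHData (RingelDualRing S T) Λᵒᵈ) : Prop :=
  IsFullTilting S Q T ∧
    ∀ lam : Λ, Nonempty
      (↥(Q'.std (OrderDual.toDual lam)) ≃ₗ[RingelDualRing S T]
        (↥T →ₗ[S] ↥(Q.costd lam)))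

/-- `0 → T_d → ⋯ → T_0 → M → 0` exact with all `T_i` tilting modules. -/
def TiltResLE (Q : QHData S Λ) (M : ModuleCat.{0} S) (d : ℕ) : Prop :=
  ∃ (N : Fin (d + 2) → ModuleCat.{0} S)
    (f : ∀ i : Fin (d + 1), ↥(N i.castSucc) →ₗ[S] ↥(N i.succ)),
    IsExactSeq S d N f ∧ N (Fin.last (d + 1)) = M ∧
    ∀ i : Fin (d + 1), IsTilting S Q (N i.castSucc)

/-- An idempotent `e` is primitive if it is nonzero and is not the sum of two
nonzero orthogonal idempotents. -/
def IsPrimitiveIdempotent (e : S) : Prop :=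
  e * e = e ∧ e ≠ 0 ∧ ∀ a b : S, a * a = a → b * b = b → a * b = 0 → b * a = 0 →
    e = a + b → a = 0 ∨ b = 0

/-- The additive subgroup `e•M = {m | e • m = m}` of `M` (for `e` idempotent). -/
def cornerSet (eG : S) (M : ModuleCat.{0} S) : AddSubgroup ↥M where
  carrier := {m | eG • m = m}
  add_mem' := by
    intro a b ha hb
    simp only [Set.mem_setOf_eq] at *
    rw [smul_add, ha, hb]
  zero_mem' := by
    simp only [Set.mem_setOf_eq]
    rw [smul_zero]
  neg_mem' := by
    intro a ha
    simp only [Set.mem_setOf_eq] at *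
    rw [smul_neg, ha]

/-- The `R`-module structure on `e•M`, where `ι : R → S` identifies `R` with the
corner ring `eSe` (as a non-unital ring, with `ι 1 = e`). -/
def cornerModuleStructure (R : Type) [Ring R] (ι : R →ₙ+* S) (eG : S)
    (hone : ι 1 = eG) (hrange : ∀ r : R, eG * ι r * eG = ι r)
    (M : ModuleCat.{0} S) : Module R ↥(cornerSet S eG M) where
  smul r m := ⟨ι r • (m : ↥M), by
    have hm : eG • (m : ↥M) = (m : ↥M) := m.2
    show eG • (ι r • (m : ↥M)) = ι r • (m : ↥M)
    have h : eG • (ι r • (m : ↥M)) = (eG * ι r * eG) • (m : ↥M) := by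
      rw [mul_assoc, mul_smul, mul_smul, hm]
    rw [h, hrange]⟩
  one_smul m := by
    apply Subtype.ext
    show ι 1 • (m : ↥M) = (m : ↥M)
    rw [hone]
    exact m.2
  mul_smul r s m := by
    apply Subtype.ext
    show ι (r * s) • (m : ↥M) = ι r • (ι s • (m : ↥M))
    rw [map_mul, mul_smul]
  smul_zero r := by
    apply Subtype.ext
    show ι r • (0 : ↥M) = 0
    rw [smul_zero]
  smul_add r m n := by
    apply Subtype.ext
    show ι r • ((m : ↥M) + (n : ↥M)) = ι r • (m : ↥M) + ι r • (n : ↥M)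
    rw [smul_add]
  add_smul r s m := by
    apply Subtype.ext
    show ι (r + s) • (m : ↥M) = ι r • (m : ↥M) + ι s • (m : ↥M)
    rw [map_add, add_smul]
  zero_smul m := by
    apply Subtype.ext
    show ι 0 • (m : ↥M) = 0
    rw [map_zero, zero_smul]

/-- The `R`-module `e•M`, where `R ≅ eSe` via `ι`. -/
noncomputable def cornerMod (R : Type) [Ring R] (ι : R →ₙ+* S) (eG : S)
    (hone : ι 1 = eG) (hrange : ∀ r : R, eG * ι r * eG = ι r)
    (M : ModuleCat.{0} S) : ModuleCat.{0} R :=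
  @ModuleCat.of R _ ↥(cornerSet S eG M) _
    (cornerModuleStructure S R ι eG hone hrange M)

end QHPaper


namespace QHProof
open QHPaper

variable {S : Type} [Ring S]

/-- short exact sequences of modules -/
def SES (A B C : ModuleCat.{0} S) : Prop :=
  ∃ (f : ↥A →ₗ[S] ↥B) (g : ↥B →ₗ[S] ↥C), Function.Injective f ∧ Function.Surjective g ∧
    LinearMap.range f = LinearMap.ker g

/-- vanishing of Ext -/
def EV (X Y : ModuleCat.{0} S) (n : ℕ) : Prop := Subsingleton (CategoryTheory.Abelian.Ext.{0} X Y n)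

theorem SES.exists_shortExact {A B C : ModuleCat.{0} S} (h : SES A B C) :
    ∃ (f : A ⟶ B) (g : B ⟶ C) (w : f ≫ g = 0), (ShortComplex.mk f g w).ShortExact := by
  obtain ⟨f, g, hf, hg, hfg⟩ := h
  have w : ModuleCat.ofHom f ≫ ModuleCat.ofHom g = 0 := by
    ext x
    have : f x ∈ LinearMap.ker g := hfg ▸ ⟨x, rfl⟩
    simpa using this
  refine ⟨ModuleCat.ofHom f, ModuleCat.ofHom g, w, ?_⟩
  refine ModuleCat.shortComplex_shortExact _ ?_ hf hg
  intro x
  have := SetLike.ext_iff.mp hfg x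
  simpa using this.symm

theorem EV.zero_iff {X Y : ModuleCat.{0} S} : EV X Y 0 ↔ ∀ f : ↥X →ₗ[S] ↥Y, f = 0 := by
  unfold EV
  rw [Abelian.Ext.homEquiv₀.subsingleton_congr]
  constructor
  · intro h f
    have := congrArg ModuleCat.Hom.hom (Subsingleton.elim (ModuleCat.ofHom f) 0)
    simpa using this
  · intro h
    refine ⟨fun a b => ?_⟩
    ext1
    rw [h a.hom, h b.hom]

theorem EV.mid {A B C Y : ModuleCat.{0} S} (h : SES A B C) {n : ℕ} (hA : EV A Y n) (hC : EV C Y n) :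
    EV B Y n := by
  obtain ⟨f, g, w, hS⟩ := h.exists_shortExact
  have := hA; have := hC
  refine subsingleton_of_forall_eq 0 fun x => ?_
  obtain ⟨y, rfl⟩ := Abelian.Ext.contravariant_sequence_exact₂ hS Y x (hA.elim _ _)
  rw [hC.elim y 0]; simp

theorem EV.right {A B C Y : ModuleCat.{0} S} (h : SES A B C) {n : ℕ} (hA : EV A Y n)
    (hB : EV B Y (n+1)) : EV C Y (n+1) := by
  obtain ⟨f, g, w, hS⟩ := h.exists_shortExact
  refine subsingleton_of_forall_eq 0 fun x => ?_
  obtain ⟨y, rfl⟩ := Abelian.Ext.contravariant_sequence_exact₃ hS Y x (hB.elim _ _) (add_comm 1 n)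
  rw [hA.elim y 0]; simp

theorem EV.left {A B C Y : ModuleCat.{0} S} (h : SES A B C) {n : ℕ} (hB : EV B Y n)
    (hC : EV C Y (n+1)) : EV A Y n := by
  obtain ⟨f, g, w, hS⟩ := h.exists_shortExact
  refine subsingleton_of_forall_eq 0 fun x => ?_
  obtain ⟨y, rfl⟩ := Abelian.Ext.contravariant_sequence_exact₁ hS Y x (add_comm 1 n) (hC.elim _ _)
  rw [hB.elim y 0]; simp

theorem EV.comid {A B C X : ModuleCat.{0} S} (h : SES A B C) {n : ℕ} (hA : EV X A n)
    (hC : EV X C n) : EV X B n := by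
  obtain ⟨f, g, w, hS⟩ := h.exists_shortExact
  refine subsingleton_of_forall_eq 0 fun x => ?_
  obtain ⟨y, rfl⟩ := Abelian.Ext.covariant_sequence_exact₂ X hS x (hC.elim _ _)
  rw [hA.elim y 0]; simp

theorem EV.coleft {A B C X : ModuleCat.{0} S} (h : SES A B C) {n : ℕ} (hC : EV X C n)
    (hB : EV X B (n+1)) : EV X A (n+1) := by
  obtain ⟨f, g, w, hS⟩ := h.exists_shortExact
  refine subsingleton_of_forall_eq 0 fun x => ?_
  obtain ⟨y, rfl⟩ := Abelian.Ext.covariant_sequence_exact₁ X hS x (hB.elim _ _) rfl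
  rw [hC.elim y 0]; simp

theorem EV.of_proj {X Y : ModuleCat.{0} S} (h : Module.Projective S ↥X) (n : ℕ) : EV X Y (n+1) := by
  have := (IsProjective.iff_projective ↥X).mp h
  exact Abelian.Ext.subsingleton_of_projective (P := X) Y n

theorem EV.of_inj {X Y : ModuleCat.{0} S} (h : Module.Injective S ↥Y) (n : ℕ) : EV X Y (n+1) := by
  have := (Module.injective_iff_injective_object S ↥Y).mp h
  exact Abelian.Ext.subsingleton_of_injective X (I := Y) n

theorem EV.of_sub {X Y : ModuleCat.{0} S} (h : Subsingleton ↥X) (n : ℕ) : EV X Y n := by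
  cases n with
  | zero => exact EV.zero_iff.mpr fun f => by ext x; rw [Subsingleton.elim x 0]; simp
  | succ n => exact EV.of_proj (Module.Projective.of_free) n

theorem EV.of_subr {X Y : ModuleCat.{0} S} (h : Subsingleton ↥Y) (n : ℕ) : EV X Y n := by
  cases n with
  | zero => exact EV.zero_iff.mpr fun f => by ext x; exact Subsingleton.elim _ _
  | succ n =>
    refine EV.of_inj ⟨?_⟩ n
    intro A B _ _ _ _ f hf g
    exact ⟨0, fun x => Subsingleton.elim _ _⟩

/-- splitting -/
theorem splits_of_EV {A B C : ModuleCat.{0} S} (f : ↥A →ₗ[S] ↥B) (g : ↥B →ₗ[S] ↥C)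
    (hf : Function.Injective f) (hg : Function.Surjective g)
    (hfg : LinearMap.range f = LinearMap.ker g) (h : EV C A 1) :
    ∃ s : ↥C →ₗ[S] ↥B, g ∘ₗ s = LinearMap.id := by
  have w : ModuleCat.ofHom f ≫ ModuleCat.ofHom g = 0 := by
    ext x
    have : f x ∈ LinearMap.ker g := hfg ▸ ⟨x, rfl⟩
    simpa using this
  have hS : (ShortComplex.mk (ModuleCat.ofHom f) (ModuleCat.ofHom g) w).ShortExact := by
    refine ModuleCat.shortComplex_shortExact _ ?_ hf hg
    intro x
    have := SetLike.ext_iff.mp hfg x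
    simpa using this.symm
  obtain ⟨y, hy⟩ := Abelian.Ext.covariant_sequence_exact₃ C hS (Abelian.Ext.mk₀ (𝟙 C)) rfl (h.elim _ _)
  obtain ⟨s, rfl⟩ := Abelian.Ext.homEquiv₀.symm.surjective y
  refine ⟨s.hom, ?_⟩
  have h2 : s ≫ ModuleCat.ofHom g = 𝟙 C := by
    apply Abelian.Ext.homEquiv₀.symm.injective
    have : (Abelian.Ext.mk₀ s).comp (Abelian.Ext.mk₀ (ModuleCat.ofHom g)) (add_zero 0) = Abelian.Ext.mk₀ (𝟙 C) := hy
    rw [Abelian.Ext.mk₀_comp_mk₀] at this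
    exact this
  have := congrArg ModuleCat.Hom.hom h2
  simpa using this

/-! ### SES constructions -/

theorem SES.of_sub {M : ModuleCat.{0} S} (N : Submodule S ↥M) :
    SES (ModuleCat.of S ↥N) M (ModuleCat.of S (↥M ⧸ N)) :=
  ⟨N.subtype, N.mkQ, N.injective_subtype, N.mkQ_surjective, by simp⟩

theorem SES.of_surj {M C : ModuleCat.{0} S} (g : ↥M →ₗ[S] ↥C) (hg : Function.Surjective g) :
    SES (ModuleCat.of S ↥(LinearMap.ker g)) M C :=
  ⟨(LinearMap.ker g).subtype, g, Submodule.injective_subtype _, hg, by simp⟩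

theorem SES.of_le {M : ModuleCat.{0} S} {A B : Submodule S ↥M} (h : A ≤ B) :
    SES (ModuleCat.of S ↥A) (ModuleCat.of S ↥B) (ModuleCat.of S (subquot S A B)) := by
  refine ⟨Submodule.inclusion h, (Submodule.comap B.subtype A).mkQ, Submodule.inclusion_injective h,
    Submodule.mkQ_surjective _, ?_⟩
  rw [Submodule.ker_mkQ, Submodule.range_inclusion]

theorem SES.congr {A B C A' B' C' : ModuleCat.{0} S} (h : SES A B C) (a : ↥A ≃ₗ[S] ↥A')
    (b : ↥B ≃ₗ[S] ↥B') (c : ↥C ≃ₗ[S] ↥C') : SES A' B' C' := by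
  obtain ⟨f, g, hf, hg, hfg⟩ := h
  refine ⟨b.toLinearMap ∘ₗ f ∘ₗ a.symm.toLinearMap, c.toLinearMap ∘ₗ g ∘ₗ b.symm.toLinearMap,
    ?_, ?_, ?_⟩
  · simpa using hf
  · simpa using hg
  · ext x
    have := SetLike.ext_iff.mp hfg (b.symm x)
    simp only [LinearMap.mem_range, LinearMap.mem_ker] at this
    simp only [LinearMap.mem_range, LinearMap.mem_ker, LinearMap.comp_apply, LinearEquiv.coe_coe,
      LinearEquiv.map_eq_zero_iff]
    rw [← this]
    constructor
    · rintro ⟨y, rfl⟩; exact ⟨a.symm y, by simp⟩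
    · rintro ⟨y, hy⟩; exact ⟨a y, by simp [hy]⟩

theorem SES.finite_mid {A B C : ModuleCat.{0} S} (h : SES A B C) (hA : Module.Finite S ↥A)
    (hC : Module.Finite S ↥C) : Module.Finite S ↥B := by
  obtain ⟨f, g, hf, hg, hfg⟩ := h
  refine Module.Finite.of_exact (f := f) (g := g) ?_ hg
  intro x
  have := SetLike.ext_iff.mp hfg x
  simpa using this.symm

theorem SES.finite_left [IsNoetherianRing S] {A B C : ModuleCat.{0} S} (h : SES A B C)
    (hB : Module.Finite S ↥B) : Module.Finite S ↥A := by
  obtain ⟨f, g, hf, hg, hfg⟩ := h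
  exact Module.Finite.of_injective f hf

theorem SES.finite_right {A B C : ModuleCat.{0} S} (h : SES A B C)
    (hB : Module.Finite S ↥B) : Module.Finite S ↥C := by
  obtain ⟨f, g, hf, hg, hfg⟩ := h
  exact Module.Finite.of_surjective g hg

theorem SES.isoZero {A C : ModuleCat.{0} S} (h : Subsingleton ↥A) : SES A C C :=
  ⟨0, LinearMap.id, fun _ _ _ => Subsingleton.elim _ _, Function.surjective_id, by
    simp⟩

/-- Filtrations -/
inductive Filt {Λ : Type} (X : Λ → ModuleCat.{0} S) (T : Set Λ) : ModuleCat.{0} S → Prop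
  | zero (M : ModuleCat.{0} S) : Subsingleton ↥M → Filt X T M
  | ext (A M : ModuleCat.{0} S) (lam : Λ) : lam ∈ T → Filt X T A → SES A M (X lam) → Filt X T M

variable {Λ : Type} {X : Λ → ModuleCat.{0} S} {T : Set Λ}

theorem Filt.congr {M M' : ModuleCat.{0} S} (h : Filt X T M) (e : ↥M ≃ₗ[S] ↥M') :
    Filt X T M' := by
  cases h with
  | zero _ h => exact .zero _ (e.symm.toEquiv.subsingleton)
  | ext A _ lam hl hA hS => exact .ext A _ lam hl hA (hS.congr (.refl _ _) e (.refl _ _))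

theorem Filt.finite (hX : ∀ l, Module.Finite S ↥(X l)) {M : ModuleCat.{0} S} (h : Filt X T M) :
    Module.Finite S ↥M := by
  induction h with
  | zero _ h => infer_instance
  | ext A M lam hl hA hS ih => exact hS.finite_mid ih (hX lam)

theorem Filt.mono {T' : Set Λ} (hT : T ⊆ T') {M : ModuleCat.{0} S} (h : Filt X T M) :
    Filt X T' M := by
  induction h with
  | zero _ h => exact .zero _ h
  | ext A M lam hl hA hS ih => exact .ext A M lam (hT hl) ih hS

theorem Filt.extn {A M B : ModuleCat.{0} S} (hA : Filt X T A) (hB : Filt X T B) (hS : SES A M B) :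
    Filt X T M := by
  induction hB generalizing M with
  | zero B h =>
    obtain ⟨f, g, hf, hg, hfg⟩ := hS
    refine hA.congr (LinearEquiv.ofBijective f ⟨hf, ?_⟩)
    rw [← LinearMap.range_eq_top, hfg]
    ext x; simp [Subsingleton.elim (g x) 0]
  | ext B' B lam hl hB hS' ih =>
    obtain ⟨f, g, hf, hg, hfg⟩ := hS
    obtain ⟨f', g', hf', hg', hfg'⟩ := hS'
    have hex : ∀ x, (g x = 0 ↔ ∃ y, f y = x) := fun x => by
      have := SetLike.ext_iff.mp hfg x
      simpa using this.symm
    have hex' : ∀ x, (g' x = 0 ↔ ∃ y, f' y = x) := fun x => by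
      have := SetLike.ext_iff.mp hfg' x
      simpa using this.symm
    let K := LinearMap.ker (g' ∘ₗ g)
    refine .ext (ModuleCat.of S ↥K) M lam hl (ih ?_)
      (SES.of_surj (g' ∘ₗ g) (hg'.comp hg))
    let e : ↥B' ≃ₗ[S] ↥(LinearMap.range f') := LinearEquiv.ofInjective f' hf'
    have hK : ∀ x : ↥K, g x.1 ∈ LinearMap.range f' := fun x => by
      rw [hfg']; exact x.2
    refine ⟨LinearMap.codRestrict K f (fun x => ?_),
      e.symm.toLinearMap ∘ₗ LinearMap.codRestrict _ (g ∘ₗ K.subtype) hK, ?_, ?_, ?_⟩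
    · have : g (f x) = 0 := (hex _).mpr ⟨x, rfl⟩
      simp [K, this]
    · intro a b hab
      exact hf (congrArg Subtype.val hab)
    · refine e.symm.surjective.comp ?_
      rintro ⟨y, hy⟩
      obtain ⟨x, rfl⟩ := hg y
      rw [hfg'] at hy
      exact ⟨⟨x, hy⟩, rfl⟩
    · ext ⟨x, hx⟩
      simp only [LinearMap.mem_range, LinearMap.mem_ker, LinearMap.comp_apply, LinearEquiv.coe_coe,
        LinearEquiv.map_eq_zero_iff]
      rw [Subtype.ext_iff]
      change _ ↔ g x = 0
      rw [hex]
      simp [Subtype.ext_iff]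

theorem Filt.single (lam : Λ) (h : lam ∈ T) : Filt X T (X lam) :=
  .ext (ModuleCat.of S PUnit) _ lam h (.zero _ (by change Subsingleton PUnit; infer_instance))
    (SES.isoZero (by change Subsingleton PUnit; infer_instance))

theorem Filt.of_chain {M : ModuleCat.{0} S} {n : ℕ} {f : Fin (n + 1) → Submodule S ↥M}
    {g : Fin n → Λ} (h : HasFiltrationWithSections S M n f (fun i => X (g i)))
    (i : Fin (n+1)) (hT : ∀ j : Fin n, j.castSucc < i → g j ∈ T) :
    Filt X T (ModuleCat.of S ↥(f i)) := by
  obtain ⟨hm, h0, h1, hs⟩ := h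
  induction i using Fin.induction with
  | zero =>
    refine .zero _ ?_
    change Subsingleton ↥(f 0)
    rw [h0]; infer_instance
  | succ i ih =>
    obtain ⟨e⟩ := hs i
    refine .ext _ _ (g i) (hT i Fin.castSucc_lt_succ)
      (ih fun j hj => hT j (hj.trans Fin.castSucc_lt_succ)) ?_
    exact (SES.of_le (hm Fin.castSucc_lt_succ.le)).congr (.refl _ _) (.refl _ _) e

theorem sec_congr {M Y Y' : ModuleCat.{0} S} {A A' B B' : Submodule S ↥M} (hA : A = A')
    (hB : B = B') (hY : Y = Y') (h : Nonempty (subquot S A' B' ≃ₗ[S] ↥Y')) :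
    Nonempty (subquot S A B ≃ₗ[S] ↥Y) := by
  subst hA hB hY; exact h

theorem Filt.to_chain {M : ModuleCat.{0} S} (h : Filt X Set.univ M) :
    ∃ (n : ℕ) (f : Fin (n + 1) → Submodule S ↥M) (g : Fin n → Λ),
      HasFiltrationWithSections S M n f (fun i => X (g i)) := by
  induction h with
  | zero M h =>
    refine ⟨0, fun _ => ⊥, Fin.elim0, monotone_const, rfl, ?_, fun i => i.elim0⟩
    exact Subsingleton.elim _ _
  | ext A M lam hl hA hS ih =>
    obtain ⟨n, f, g, hm, h0, h1, hs⟩ := ih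
    obtain ⟨i, p, hi, hp, hip⟩ := hS
    refine ⟨n+1, Fin.snoc (α := fun _ => Submodule S ↥M) (fun j => (f j).map i) ⊤,
      Fin.snoc (α := fun _ => Λ) g lam, ?_, ?_, ?_, ?_⟩
    · intro a b hab
      induction b using Fin.lastCases with
      | last => simp
      | cast b =>
        induction a using Fin.lastCases with
        | last => exact absurd hab (by simp)
        | cast a =>
          simp only [Fin.snoc_castSucc]
          exact Submodule.map_mono (hm (by simpa using hab))
    · have : (0 : Fin (n+2)) = (0 : Fin (n+1)).castSucc := rfl
      rw [this, Fin.snoc_castSucc, h0, Submodule.map_bot]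
    · simp
    · intro j
      induction j using Fin.lastCases with
      | last =>
        refine sec_congr (A' := LinearMap.ker p) (B' := ⊤) (Y' := X lam) ?_ ?_ ?_ ?_
        · rw [Fin.snoc_castSucc, h1, Submodule.map_top, hip]
        · rw [Fin.succ_last]; exact Fin.snoc_last _ _
        · simp
        let q : ↥(⊤ : Submodule S ↥M) →ₗ[S] ↥(X lam) := p ∘ₗ Submodule.subtype _
        have hq : Function.Surjective q := fun y => by
          obtain ⟨x, rfl⟩ := hp y; exact ⟨⟨x, trivial⟩, rfl⟩
        exact ⟨(Submodule.quotEquivOfEq _ (LinearMap.ker q) (by ext; simp [q])).trans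
          (q.quotKerEquivOfSurjective hq)⟩
      | cast j =>
        refine sec_congr (A' := (f j.castSucc).map i) (B' := (f j.succ).map i) (Y' := X (g j))
          ?_ ?_ ?_ ?_
        · rw [Fin.snoc_castSucc]
        · rw [Fin.succ_castSucc, Fin.snoc_castSucc]
        · simp
        obtain ⟨e⟩ := hs j
        let e1 : ↥(f j.succ) ≃ₗ[S] ↥((f j.succ).map i) := Submodule.equivMapOfInjective i hi _
        refine ⟨(Submodule.Quotient.equiv _ _ e1 ?_).symm.trans e⟩
        ext ⟨x, hx⟩
        simp only [Submodule.mem_map, Submodule.mem_comap, Submodule.subtype_apply]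
        constructor
        · rintro ⟨y, hy, hy'⟩
          exact ⟨y.1, hy, by simpa [e1, Subtype.ext_iff] using hy'⟩
        · rintro ⟨y, hy, hy'⟩
          exact ⟨⟨y, hm Fin.castSucc_lt_succ.le hy⟩, hy, by simpa [e1, Subtype.ext_iff] using hy'⟩

theorem Filt.EV_left {Y : ModuleCat.{0} S} {n : ℕ} (h : ∀ l ∈ T, EV (X l) Y n)
    {M : ModuleCat.{0} S} (hM : Filt X T M) : EV M Y n := by
  induction hM with
  | zero M hM => exact EV.of_sub hM n
  | ext A M lam hl hA hS ih => exact EV.mid hS ih (h lam hl)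

theorem Filt.EV_right {Y : ModuleCat.{0} S} {n : ℕ} (h : ∀ l ∈ T, EV Y (X l) n)
    {M : ModuleCat.{0} S} (hM : Filt X T M) : EV Y M n := by
  induction hM with
  | zero M hM => exact EV.of_subr hM n
  | ext A M lam hl hA hS ih => exact EV.comid hS ih (h lam hl)

end QHProof


namespace QHProof
open QHPaper

variable {S : Type} [Ring S] {Λ : Type} [Fintype Λ] [PartialOrder Λ] (Q : QHData S Λ)

/-- there is a nonzero map from the projective cover -/
def PNZ (lam : Λ) (M : ModuleCat.{0} S) : Prop := ∃ h : ↥(Q.P lam) →ₗ[S] ↥M, h ≠ 0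

variable {Q}

theorem PNZ.of_inj {lam : Λ} {M N : ModuleCat.{0} S} (h : PNZ Q lam M) (f : ↥M →ₗ[S] ↥N)
    (hf : Function.Injective f) : PNZ Q lam N := by
  obtain ⟨p, hp⟩ := h
  refine ⟨f ∘ₗ p, fun h0 => hp ?_⟩
  ext x
  have := LinearMap.congr_fun h0 x
  exact hf (by simpa using this)

theorem PNZ.of_surj {lam : Λ} {M N : ModuleCat.{0} S} (h : PNZ Q lam N) (f : ↥M →ₗ[S] ↥N)
    (hf : Function.Surjective f) : PNZ Q lam M := by
  obtain ⟨p, hp⟩ := h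
  have := (Q.projCover lam).1
  obtain ⟨p', hp'⟩ := Module.projective_lifting_property f p hf
  refine ⟨p', fun h0 => hp ?_⟩
  rw [← hp', h0, LinearMap.comp_zero]

theorem ker_le {lam : Λ} {M : Type} [AddCommGroup M] [Module S M] {h : ↥(Q.P lam) →ₗ[S] M}
    (hh : h ≠ 0)
    {π : ↥(Q.P lam) →ₗ[S] ↥(Q.L lam)} (hs : Function.Surjective π)
    (hπ : ∀ N : Submodule S ↥(Q.P lam), N ⊔ LinearMap.ker π = ⊤ → N = ⊤) :
    LinearMap.ker h ≤ LinearMap.ker π := by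
  have := Q.simpleL lam
  have hc : IsCoatom (LinearMap.ker π) := LinearMap.isCoatom_ker_of_surjective hs
  by_contra hle
  have h1 : LinearMap.ker h ⊔ LinearMap.ker π = ⊤ := by
    apply hc.2
    exact lt_of_le_of_ne le_sup_right (fun h => hle (h ▸ le_sup_left))
  exact hh (LinearMap.ker_eq_top.mp (hπ _ h1))

theorem simple_of_PNZ {lam : Λ} {M : ModuleCat.{0} S} (hM : IsSimpleModule S ↥M)
    (h : PNZ Q lam M) : Nonempty (↥M ≃ₗ[S] ↥(Q.L lam)) := by
  obtain ⟨h, hh⟩ := h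
  obtain ⟨_, π, hs, hπ⟩ := Q.projCover lam
  have := Q.simpleL lam
  have hle := ker_le hh hs hπ
  have hsh : Function.Surjective h := LinearMap.surjective_of_ne_zero hh
  have hc : IsCoatom (LinearMap.ker h) := LinearMap.isCoatom_ker_of_surjective hsh
  have hc' : IsCoatom (LinearMap.ker π) := LinearMap.isCoatom_ker_of_surjective hs
  have heq : LinearMap.ker h = LinearMap.ker π := by
    rcases eq_or_lt_of_le hle with h | h
    · exact h
    · exact absurd (hc.2 _ h) hc'.1
  exact ⟨(h.quotKerEquivOfSurjective hsh).symm.trans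
    ((Submodule.quotEquivOfEq _ _ heq).trans (π.quotKerEquivOfSurjective hs))⟩

theorem PNZ_L (lam : Λ) : PNZ Q lam (Q.L lam) := by
  obtain ⟨_, π, hs, hπ⟩ := Q.projCover lam
  have := Q.simpleL lam
  have : Nontrivial ↥(Q.L lam) := IsSimpleModule.nontrivial S _
  refine ⟨π, fun h => ?_⟩
  obtain ⟨x, hx⟩ := exists_ne (0 : ↥(Q.L lam))
  obtain ⟨y, rfl⟩ := hs x
  exact hx (by simp [h])

theorem PNZ_L_eq {lam mu : Λ} (h : PNZ Q lam (Q.L mu)) : lam = mu := by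
  by_contra hne
  obtain ⟨e⟩ := simple_of_PNZ (Q.simpleL mu) h
  exact (Q.nonisoL lam mu hne).false e.symm

theorem P_finite (lam : Λ) : Module.Finite S ↥(Q.P lam) := by
  obtain ⟨_, π, hs, hπ⟩ := Q.projCover lam
  have := Q.simpleL lam
  have : Nontrivial ↥(Q.L lam) := IsSimpleModule.nontrivial S _
  obtain ⟨x, hx⟩ := exists_ne (0 : ↥(Q.L lam))
  obtain ⟨y, rfl⟩ := hs x
  have hc : IsCoatom (LinearMap.ker π) := LinearMap.isCoatom_ker_of_surjective hs
  have : Submodule.span S {y} = ⊤ := by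
    apply hπ
    apply hc.2
    refine lt_of_le_of_ne le_sup_right (fun h => hx ?_)
    have : y ∈ LinearMap.ker π := by
      rw [h]; exact Submodule.mem_sup_left (Submodule.mem_span_singleton_self y)
    exact this
  exact ⟨⟨{y}, by simpa using this⟩⟩

/-- sub-quotient form -/
theorem PNZ.subquot {lam : Λ} {M : ModuleCat.{0} S} (h : PNZ Q lam M) :
    ∃ (B : Submodule S ↥M) (p : ↥B →ₗ[S] ↥(Q.L lam)), Function.Surjective p := by
  obtain ⟨h, hh⟩ := h
  obtain ⟨_, π, hs, hπ⟩ := Q.projCover lam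
  have hle := ker_le hh hs hπ
  refine ⟨LinearMap.range h, (Submodule.liftQ _ π hle) ∘ₗ h.quotKerEquivRange.symm.toLinearMap, ?_⟩
  intro x
  obtain ⟨y, rfl⟩ := hs x
  refine ⟨h.quotKerEquivRange (Submodule.Quotient.mk y), ?_⟩
  rw [LinearMap.comp_apply, LinearEquiv.coe_coe, LinearEquiv.symm_apply_apply]
  exact Submodule.liftQ_apply _ _ _

theorem cf_iff {lam : Λ} {M : ModuleCat.{0} S} : IsCompFactor S (Q.L lam) M ↔ PNZ Q lam M := by
  constructor
  · rintro ⟨A, B, hAB, ⟨e⟩⟩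
    have h1 : PNZ Q lam (ModuleCat.of S ↥B) :=
      (PNZ_L lam).of_surj (M := ModuleCat.of S ↥B) (e.toLinearMap ∘ₗ Submodule.mkQ _)
        (e.surjective.comp (Submodule.mkQ_surjective _))
    exact h1.of_inj B.subtype B.injective_subtype
  · intro h
    obtain ⟨B, p, hp⟩ := h.subquot
    refine ⟨(LinearMap.ker p).map B.subtype, B, Submodule.map_subtype_le _ _, ⟨?_⟩⟩
    refine (Submodule.quotEquivOfEq _ (LinearMap.ker p) ?_).trans (p.quotKerEquivOfSurjective hp)
    exact Submodule.comap_map_eq_of_injective B.injective_subtype _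

/-! ### standard modules -/

theorem std_quot (lam : Λ) : ∃ q : ↥(Q.P lam) →ₗ[S] ↥(Q.std lam), Function.Surjective q ∧
    (∀ mu, PNZ Q mu (Q.std lam) → mu ≤ lam) ∧
    ∀ K' : Submodule S ↥(Q.P lam), (∀ mu, PNZ Q mu (ModuleCat.of S (↥(Q.P lam) ⧸ K')) → mu ≤ lam) →
      LinearMap.ker q ≤ K' := by
  obtain ⟨K, ⟨e⟩, h1, h2⟩ := Q.stdSpec lam
  refine ⟨e.symm.toLinearMap ∘ₗ K.mkQ, e.symm.surjective.comp K.mkQ_surjective, ?_, ?_⟩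
  · intro mu h
    refine h1 mu (cf_iff.mpr ?_)
    exact h.of_inj (N := ModuleCat.of S (↥(Q.P lam) ⧸ K)) e.toLinearMap e.injective
  · intro K' h
    have := h2 K' (fun mu hmu => h mu (cf_iff.mp hmu))
    convert this using 1
    ext x; simp

theorem std_finite (lam : Λ) : Module.Finite S ↥(Q.std lam) := by
  obtain ⟨q, hq, _⟩ := std_quot (Q := Q) lam
  have := P_finite (Q := Q) lam
  exact Module.Finite.of_surjective q hq

theorem std_rad (lam : Λ) : ∃ R : ModuleCat.{0} S, SES R (Q.std lam) (Q.L lam) ∧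
    ∀ mu, PNZ Q mu R → mu < lam := by
  obtain ⟨n, f, hm, h0, h1, hsimp, hcard⟩ := Q.multOne lam
  obtain ⟨q, hq, hle, -⟩ := std_quot (Q := Q) lam
  obtain ⟨hsub, ⟨i, ⟨e⟩⟩⟩ := Nat.card_eq_one_iff_unique.mp hcard
  have huniq : ∀ j : Fin n, Nonempty (subquot S (f j.castSucc) (f j.succ) ≃ₗ[S] ↥(Q.L lam)) → j = i :=
    fun j hj => congrArg Subtype.val (hsub.elim ⟨j, hj⟩ ⟨i, ⟨e⟩⟩)
  have step : ∀ (h : ↥(Q.P lam) →ₗ[S] ↥(Q.std lam)) (j : Fin n), LinearMap.range h ≤ f j.succ →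
      ¬ LinearMap.range h ≤ f j.castSucc → j = i := by
    intro h j hj1 hj2
    apply huniq
    let h' : ↥(Q.P lam) →ₗ[S] ↥(f j.succ) := LinearMap.codRestrict _ h (fun x => hj1 ⟨x, rfl⟩)
    refine simple_of_PNZ (M := ModuleCat.of S (subquot S (f j.castSucc) (f j.succ))) (hsimp j)
      ⟨Submodule.mkQ _ ∘ₗ h', fun hz => hj2 ?_⟩
    rintro _ ⟨x, rfl⟩
    have := LinearMap.congr_fun hz x
    have h3 : h' x ∈ Submodule.comap (f j.succ).subtype (f j.castSucc) :=
      (Submodule.Quotient.mk_eq_zero _).mp this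
    exact h3
  have hb : ∀ (h : ↥(Q.P lam) →ₗ[S] ↥(Q.std lam)), h ≠ 0 → ∀ j : Fin (n+1),
      LinearMap.range h ≤ f j → i.castSucc < j := by
    intro h hh j
    induction j using Fin.induction with
    | zero =>
      intro hr
      rw [h0, le_bot_iff, LinearMap.range_eq_bot] at hr
      exact absurd hr hh
    | succ j ih =>
      intro hr
      by_cases hc : LinearMap.range h ≤ f j.castSucc
      · exact (ih hc).trans Fin.castSucc_lt_succ
      · rw [step h j hr hc]; exact Fin.castSucc_lt_succ
  have ha : ∀ (h : ↥(Q.P lam) →ₗ[S] ↥(Q.std lam)), ∀ j : Fin (n+1),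
      i.succ ≤ j → LinearMap.range h ≤ f j := by
    intro h j
    induction j using Fin.reverseInduction with
    | last => intro _; rw [h1]; exact le_top
    | cast j ih =>
      intro hj
      by_contra hc
      have := step h j (ih (hj.trans Fin.castSucc_lt_succ.le)) hc
      subst this
      exact absurd hj (not_le_of_gt Fin.castSucc_lt_succ)
  have htop : f i.succ = ⊤ := by
    have := ha q i.succ le_rfl
    rwa [LinearMap.range_eq_top.mpr hq, top_le_iff] at this
  refine ⟨ModuleCat.of S ↥(f i.castSucc), ?_, ?_⟩
  · exact (SES.of_le (hm Fin.castSucc_lt_succ.le)).congr (.refl _ _)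
      ((LinearEquiv.ofEq _ _ htop).trans Submodule.topEquiv) e
  · intro mu hmu
    refine lt_of_le_of_ne (hle mu (hmu.of_inj _ (f i.castSucc).injective_subtype)) ?_
    rintro rfl
    obtain ⟨h, hh⟩ := hmu
    refine lt_irrefl _ (hb ((f i.castSucc).subtype ∘ₗ h) (fun hz => hh ?_) i.castSucc ?_)
    · ext x
      have := LinearMap.congr_fun hz x
      simpa using this
    · rintro _ ⟨x, rfl⟩
      exact (h x).2

theorem P_ses (lam : Λ) : ∃ K : ModuleCat.{0} S, SES K (Q.P lam) (Q.std lam) ∧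
    Filt Q.std {nu | lam < nu} K := by
  obtain ⟨n, f, g, hF, hge, hcard⟩ := Q.projFilt lam
  obtain ⟨hsub, ⟨i, hi⟩⟩ := Nat.card_eq_one_iff_unique.mp hcard
  cases n with
  | zero => exact i.elim0
  | succ n =>
    obtain ⟨hm, h0, h1, hs⟩ := id hF
    obtain ⟨e⟩ := hs (Fin.last n)
    have hses : SES (ModuleCat.of S ↥(f (Fin.last n).castSucc)) (Q.P lam) (Q.std (g (Fin.last n))) := by
      refine (SES.of_le (hm Fin.castSucc_lt_succ.le)).congr (.refl _ _)
        ((LinearEquiv.ofEq _ _ ?_).trans Submodule.topEquiv) e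
      rw [Fin.succ_last]; exact h1
    have hlast : g (Fin.last n) = lam := by
      obtain ⟨R, ⟨_, p, _, hp, _⟩, _⟩ := std_rad (Q := Q) (g (Fin.last n))
      obtain ⟨_, q, _, hq, _⟩ := hses
      refine (PNZ_L_eq (Q := Q) ⟨p ∘ₗ q, fun hz => ?_⟩).symm
      have := Q.simpleL (g (Fin.last n))
      have : Nontrivial ↥(Q.L (g (Fin.last n))) := IsSimpleModule.nontrivial S _
      obtain ⟨x, hx⟩ := exists_ne (0 : ↥(Q.L (g (Fin.last n))))
      obtain ⟨y, rfl⟩ := (hp.comp hq) x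
      exact hx (LinearMap.congr_fun hz y)
    rw [hlast] at hses
    refine ⟨_, hses, Filt.of_chain hF _ ?_⟩
    intro j hj
    refine lt_of_le_of_ne (hge j) (fun h => ?_)
    have : j = Fin.last n := congrArg Subtype.val (hsub.elim ⟨j, h.symm⟩ ⟨Fin.last n, hlast⟩)
    subst this
    exact lt_irrefl _ hj

/-! ### costandard modules -/

theorem costd_spec (lam : Λ) : ∃ V : Submodule S ↥(Q.I lam), Nonempty (↥(Q.costd lam) ≃ₗ[S] ↥V) ∧
    (∀ mu, PNZ Q mu (ModuleCat.of S ↥V) → mu ≤ lam) ∧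
    ∀ V' : Submodule S ↥(Q.I lam), (∀ mu, PNZ Q mu (ModuleCat.of S ↥V') → mu ≤ lam) → V' ≤ V := by
  obtain ⟨V, e, h1, h2⟩ := Q.costdSpec lam
  exact ⟨V, e, fun mu h => h1 mu (cf_iff.mpr h), fun V' h => h2 V' fun mu hmu => h mu (cf_iff.mp hmu)⟩

theorem costd_cf {lam mu : Λ} (h : PNZ Q mu (Q.costd lam)) : mu ≤ lam := by
  obtain ⟨V, ⟨e⟩, h1, -⟩ := costd_spec (Q := Q) lam
  exact h1 mu (h.of_inj (N := ModuleCat.of S ↥V) e.toLinearMap e.injective)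

theorem costd_ext {lam : Λ} {X : ModuleCat.{0} S} (hX : ∀ mu, PNZ Q mu X → mu ≤ lam) :
    EV X (Q.costd lam) 1 := by
  obtain ⟨V, ⟨e⟩, h1, h2⟩ := costd_spec (Q := Q) lam
  have hs : SES (Q.costd lam) (Q.I lam) (ModuleCat.of S (↥(Q.I lam) ⧸ V)) :=
    (SES.of_sub V).congr e.symm (.refl _ _) (.refl _ _)
  refine EV.coleft hs (EV.zero_iff.mpr fun h => ?_) (EV.of_inj (Q.injHull lam).1 0)
  change ↥X →ₗ[S] (↥(Q.I lam) ⧸ V) at h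
  let W := (LinearMap.range h).comap V.mkQ
  have hW : W ≤ V := by
    apply h2
    rintro mu ⟨p, hp⟩
    by_cases hz : V.mkQ ∘ₗ W.subtype ∘ₗ p = 0
    · apply h1
      have hV : ∀ x, (p x).1 ∈ V := fun x => by
        have := LinearMap.congr_fun hz x
        exact (Submodule.Quotient.mk_eq_zero _).mp this
      refine ⟨LinearMap.codRestrict V (W.subtype ∘ₗ p) hV, fun h0 => hp ?_⟩
      ext x
      have := congrArg Subtype.val (LinearMap.congr_fun h0 x)
      exact this
    · apply hX
      have : PNZ Q mu (ModuleCat.of S ↥(LinearMap.range h)) := by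
        refine ⟨LinearMap.codRestrict (LinearMap.range h) (V.mkQ ∘ₗ W.subtype ∘ₗ p)
          (fun x => (p x).2), fun h0 => hz ?_⟩
        ext x
        have := congrArg Subtype.val (LinearMap.congr_fun h0 x)
        exact this
      exact this.of_surj (M := X) h.rangeRestrict h.surjective_rangeRestrict
  refine LinearMap.ext fun x => ?_
  obtain ⟨y, hy⟩ := V.mkQ_surjective (h x)
  have : y ∈ W := ⟨x, hy.symm⟩
  change h x = 0
  rw [← hy]
  exact (Submodule.Quotient.mk_eq_zero _).mpr (hW this)

theorem ext_std_costd (mu lam : Λ) (n : ℕ) : EV (Q.std mu) (Q.costd lam) (n+1) := by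
  induction mu using WellFoundedGT.induction generalizing n with
  | ind mu ih =>
  obtain ⟨K, hS, hK⟩ := P_ses (Q := Q) mu
  cases n with
  | zero =>
    obtain ⟨q, hq, hle, -⟩ := std_quot (Q := Q) mu
    by_cases hml : mu ≤ lam
    · exact costd_ext fun nu h => (hle nu h).trans hml
    · refine EV.right hS (Filt.EV_left (fun nu hnu => EV.zero_iff.mpr fun h => ?_) hK)
        (EV.of_proj (Q.projCover mu).1 0)
      by_contra hh
      apply hml
      refine (le_of_lt hnu).trans (costd_cf (Q := Q) ?_)
      obtain ⟨q, hq, -⟩ := std_quot (Q := Q) nu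
      refine ⟨h ∘ₗ q, fun h0 => hh ?_⟩
      ext x
      obtain ⟨y, rfl⟩ := hq x
      exact LinearMap.congr_fun h0 y
  | succ n =>
    exact EV.right hS (Filt.EV_left (fun nu hnu => ih nu hnu n) hK)
      (EV.of_proj (Q.projCover mu).1 _)

/-! ### global dimension -/

/-- projective dimension less than `n` -/
def PD (M : ModuleCat.{0} S) (n : ℕ) : Prop := ∀ (Y : ModuleCat.{0} S) (i : ℕ), n ≤ i → EV M Y i

theorem PD.mono {M : ModuleCat.{0} S} {n m : ℕ} (h : PD M n) (hnm : n ≤ m) : PD M m :=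
  fun Y i hi => h Y i (hnm.trans hi)

theorem PD.uniform (X : Λ → ModuleCat.{0} S) (T : Set Λ) (h : ∀ l ∈ T, ∃ n, PD (X l) n) :
    ∃ n, ∀ l ∈ T, PD (X l) n := by
  classical
  have : ∀ l, ∃ n, l ∈ T → PD (X l) n := fun l => by
    by_cases hl : l ∈ T
    · obtain ⟨n, hn⟩ := h l hl; exact ⟨n, fun _ => hn⟩
    · exact ⟨0, fun h => absurd h hl⟩
  choose n hn using this
  exact ⟨Finset.univ.sup n, fun l hl => (hn l hl).mono (Finset.le_sup (Finset.mem_univ l))⟩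

theorem PD_std (mu : Λ) : ∃ n, PD (Q.std mu) n := by
  induction mu using WellFoundedGT.induction with
  | ind mu ih =>
  obtain ⟨K, hS, hK⟩ := P_ses (Q := Q) mu
  obtain ⟨n, hn⟩ := PD.uniform Q.std {nu | mu < nu} ih
  refine ⟨n+1, fun Y i hi => ?_⟩
  obtain ⟨j, rfl⟩ : ∃ j, i = j + 1 := ⟨i - 1, by omega⟩
  exact EV.right hS (Filt.EV_left (fun nu hnu => hn nu hnu Y j (by omega)) hK)
      (EV.of_proj (Q.projCover mu).1 _)

theorem PD_factors (T : Set Λ) (n : ℕ) (hT : ∀ mu ∈ T, PD (Q.L mu) n) (M : Type) [AddCommGroup M]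
    [Module S M] (hM : IsFiniteLength S M) (hf : ∀ mu, PNZ Q mu (ModuleCat.of S M) → mu ∈ T) :
    PD (ModuleCat.of S M) n := by
  induction hM with
  | @of_subsingleton M _ _ h => exact fun Y i _ => EV.of_sub (X := ModuleCat.of S M) h i
  | @of_simple_quotient M _ _ N hs _ ih =>
    obtain ⟨mu, ⟨e⟩⟩ := Q.fullL (ModuleCat.of S (M ⧸ N)) hs
    have hses : SES (ModuleCat.of S ↥N) (ModuleCat.of S M) (Q.L mu) :=
      (SES.of_sub (M := ModuleCat.of S M) N).congr (.refl _ _) (.refl _ _) e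
    have hmu : mu ∈ T := by
      apply hf
      exact (PNZ_L mu).of_surj (M := ModuleCat.of S M) (e.toLinearMap ∘ₗ N.mkQ)
        (e.surjective.comp N.mkQ_surjective)
    have hN := ih (fun nu hnu => hf nu (hnu.of_inj (N := ModuleCat.of S M) N.subtype
      N.injective_subtype))
    exact fun Y i hi => EV.mid hses (hN Y i hi) (hT mu hmu Y i hi)

theorem finlen [IsNoetherianRing S] [IsArtinianRing S] (M : Type) [AddCommGroup M] [Module S M]
    (h : Module.Finite S M) : IsFiniteLength S M :=
  isFiniteLength_iff_isNoetherian_isArtinian.mpr ⟨inferInstance, inferInstance⟩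

theorem PD_L [IsNoetherianRing S] [IsArtinianRing S] (mu : Λ) : ∃ n, PD (Q.L mu) n := by
  induction mu using WellFoundedLT.induction with
  | ind mu ih =>
  obtain ⟨n, hn⟩ := PD.uniform Q.L {nu | nu < mu} ih
  obtain ⟨m, hm⟩ := PD_std (Q := Q) mu
  obtain ⟨R, hS, hR⟩ := std_rad (Q := Q) mu
  have hRf : Module.Finite S ↥R := hS.finite_left (std_finite mu)
  have hRn : PD R n := PD_factors (Q := Q) {nu | nu < mu} n hn ↥R (finlen _ hRf) hR
  refine ⟨max n m + 1, fun Y i hi => ?_⟩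
  obtain ⟨j, rfl⟩ : ∃ j, i = j + 1 := ⟨i - 1, by omega⟩
  exact EV.right hS (hRn Y j (by omega)) (hm Y (j+1) (by omega))

theorem glob (Q : QHData S Λ) [IsNoetherianRing S] [IsArtinianRing S] :
    ∃ n, ∀ M : ModuleCat.{0} S, Module.Finite S ↥M → PD M n := by
  obtain ⟨n, hn⟩ := PD.uniform Q.L Set.univ (fun l _ => PD_L (Q := Q) l)
  exact ⟨n, fun M hM => PD_factors (Q := Q) Set.univ n hn ↥M (finlen _ hM) fun _ _ => trivial⟩

/-! ### projectives are filtered -/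

theorem P_filt (lam : Λ) : Filt Q.std Set.univ (Q.P lam) := by
  obtain ⟨K, hS, hK⟩ := P_ses (Q := Q) lam
  exact .ext K _ lam trivial (hK.mono (Set.subset_univ _)) hS

theorem proj_filt_aux [IsNoetherianRing S] [IsArtinianRing S] (M : ModuleCat.{0} S)
    (hf : Module.Finite S ↥M) (A : Submodule S ↥M) (hA : Module.Projective S ↥A) :
    Filt Q.std Set.univ (ModuleCat.of S ↥A) := by
  have : WellFoundedLT (Submodule S ↥M) := inferInstance
  induction A using WellFoundedLT.induction with
  | ind A ih =>
  rcases subsingleton_or_nontrivial ↥A with h | h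
  · exact .zero _ h
  · obtain ⟨m, hm⟩ := IsCoatomic.exists_coatom (Submodule S ↥A)
    have hs : IsSimpleModule S (↥A ⧸ m) := isSimpleModule_iff_isCoatom.mpr hm
    obtain ⟨mu, ⟨e⟩⟩ := Q.fullL (ModuleCat.of S (↥A ⧸ m)) hs
    change (↥A ⧸ m) ≃ₗ[S] _ at e
    obtain ⟨hP, π, hπs, hπ⟩ := Q.projCover mu
    obtain ⟨r, hr⟩ := Module.projective_lifting_property π (e.toLinearMap ∘ₗ m.mkQ) hπs
    have hrs : Function.Surjective r := by
      rw [← LinearMap.range_eq_top]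
      apply hπ
      rw [eq_top_iff]
      intro x _
      obtain ⟨y, hy⟩ := (e.surjective.comp m.mkQ_surjective) (π x)
      have h2 : π (r y) = π x := by
        have := LinearMap.congr_fun hr y
        exact this.trans hy
      rw [← add_sub_cancel (r y) x]
      exact Submodule.add_mem_sup ⟨y, rfl⟩ (by simp [h2])
    obtain ⟨s, hs⟩ := Module.projective_lifting_property r LinearMap.id hrs
    have hne : r ≠ 0 := by
      rintro rfl
      have hz : e.toLinearMap ∘ₗ m.mkQ = 0 := by rw [← hr, LinearMap.comp_zero]
      apply hm.1
      rw [eq_top_iff]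
      intro x _
      have := LinearMap.congr_fun hz x
      simpa using this
    have hproj : Module.Projective S ↥(LinearMap.ker r) := by
      have hmem : ∀ x, ((LinearMap.id : ↥A →ₗ[S] ↥A) - s ∘ₗ r) x ∈ LinearMap.ker r := fun x => by
        have := LinearMap.congr_fun hs (r x)
        simp at this
        simp [this]
      refine Module.Projective.of_split (LinearMap.ker r).subtype
        (LinearMap.codRestrict _ ((LinearMap.id : ↥A →ₗ[S] ↥A) - s ∘ₗ r) hmem) ?_
      ext x
      have : r x.1 = 0 := x.2
      simp [this]
    let B := (LinearMap.ker r).map A.subtype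
    let eB : ↥(LinearMap.ker r) ≃ₗ[S] ↥B := Submodule.equivMapOfInjective _ A.injective_subtype _
    have hlt : B < A := by
      refine lt_of_le_of_ne (Submodule.map_subtype_le _ _) (fun hBA => hne ?_)
      ext x
      have hx : x.1 ∈ B := by rw [hBA]; exact x.2
      obtain ⟨y, hy, hyx⟩ := hx
      have : y = x := Subtype.ext hyx
      subst this
      exact hy
    have hB := ih B hlt (Module.Projective.of_equiv eB)
    exact Filt.extn (hB.congr (M' := ModuleCat.of S ↥(LinearMap.ker r)) eB.symm) (P_filt mu)
      (SES.of_surj (M := ModuleCat.of S ↥A) r hrs)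

theorem proj_filt [IsNoetherianRing S] [IsArtinianRing S] (M : ModuleCat.{0} S)
    (hf : Module.Finite S ↥M) (hM : Module.Projective S ↥M) :
    Filt Q.std Set.univ M :=
  (proj_filt_aux (Q := Q) M hf ⊤ (Module.Projective.of_equiv Submodule.topEquiv.symm)).congr
    Submodule.topEquiv

end QHProof


namespace QHProof
open QHPaper

variable {S : Type} [Ring S] {Λ : Type} [Fintype Λ] [PartialOrder Λ]

theorem EV.congr_right {X Y Y' : ModuleCat.{0} S} {n : ℕ} (h : EV X Y n) (e : ↥Y ≃ₗ[S] ↥Y') :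
    EV X Y' n := by
  have hs : Subsingleton ↥(ModuleCat.of S PUnit) := by change Subsingleton PUnit; infer_instance
  exact EV.comid ((SES.isoZero (C := Y) hs).congr (.refl _ _) e (.refl _ _)) (EV.of_subr hs n) h

/-- resolutions -/
def Res (C : ModuleCat.{0} S → Prop) : ℕ → ModuleCat.{0} S → Prop
  | 0, M => C M
  | d+1, M => ∃ K P, SES K P M ∧ C P ∧ Res C d K

/-- coresolutions -/
def CoRes (C : ModuleCat.{0} S → Prop) : ℕ → ModuleCat.{0} S → Prop
  | 0, M => C M
  | d+1, M => ∃ I K, SES M I K ∧ C I ∧ CoRes C d K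

theorem CoRes.congr {C : ModuleCat.{0} S → Prop}
    (hC : ∀ A B : ModuleCat.{0} S, (↥A ≃ₗ[S] ↥B) → C A → C B) {d : ℕ} {M M' : ModuleCat.{0} S}
    (h : CoRes C d M) (e : ↥M ≃ₗ[S] ↥M') : CoRes C d M' := by
  cases d with
  | zero => exact hC _ _ e h
  | succ d =>
    obtain ⟨I, K, hS, hI, hK⟩ := h
    exact ⟨I, K, hS.congr e (.refl _ _) (.refl _ _), hI, hK⟩

theorem Res.mono {C C' : ModuleCat.{0} S → Prop} (hC : ∀ M, C M → C' M) {d : ℕ}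
    {M : ModuleCat.{0} S} (h : Res C d M) : Res C' d M := by
  induction d generalizing M with
  | zero => exact hC _ h
  | succ d ih =>
    obtain ⟨I, K, hS, hI, hK⟩ := h
    exact ⟨I, K, hS, hC _ hI, ih hK⟩

/-- finite projective -/
def FinProj (M : ModuleCat.{0} S) : Prop := Module.Finite S ↥M ∧ Module.Projective S ↥M

theorem res_of_EV [IsNoetherianRing S] (g : ℕ) (X : ModuleCat.{0} S) (hX : Module.Finite S ↥X)
    (h : ∀ Y : ModuleCat.{0} S, Module.Finite S ↥Y → EV X Y (g+1)) : Res FinProj g X := by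
  induction g generalizing X with
  | zero =>
    obtain ⟨n, p, hp⟩ := Module.Finite.exists_fin' S ↥X
    obtain ⟨s, hs⟩ := splits_of_EV (A := ModuleCat.of S ↥(LinearMap.ker p))
      (B := ModuleCat.of S (Fin n → S)) (C := X) (LinearMap.ker p).subtype p
      (LinearMap.ker p).injective_subtype hp (by simp)
      (h _ (by change Module.Finite S ↥(LinearMap.ker p); infer_instance))
    exact ⟨hX, Module.Projective.of_split (M := Fin n → S) s p hs⟩
  | succ g ih =>
    obtain ⟨n, p, hp⟩ := Module.Finite.exists_fin' S ↥X
    have hS := SES.of_surj (M := ModuleCat.of S (Fin n → S)) (C := X) p hp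
    have hPf : Module.Finite S (Fin n → S) := inferInstance
    have hPp : Module.Projective S (Fin n → S) := inferInstance
    refine ⟨_, _, hS, ⟨hPf, hPp⟩, ih _ (hS.finite_left hPf) fun Y hY => ?_⟩
    exact EV.left hS (EV.of_proj hPp g) (h Y hY)

/-- splice object -/
def spN {d : ℕ} (M I : ModuleCat.{0} S) (N : Fin (d + 2) → ModuleCat.{0} S) :
    Fin (d + 3) → ModuleCat.{0} S
  | ⟨0, _⟩ => M
  | ⟨1, _⟩ => I
  | ⟨i+2, h⟩ => N ⟨i+1, by omega⟩

/-- splice maps -/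
def spF {d : ℕ} {M I : ModuleCat.{0} S} {N : Fin (d + 2) → ModuleCat.{0} S}
    (f : ∀ i : Fin (d + 1), ↥(N i.castSucc) →ₗ[S] ↥(N i.succ))
    (j : ↥M →ₗ[S] ↥I) (p : ↥I →ₗ[S] ↥(N 0)) :
    ∀ i : Fin (d + 2), ↥(spN M I N i.castSucc) →ₗ[S] ↥(spN M I N i.succ)
  | ⟨0, _⟩ => j
  | ⟨1, _⟩ => (f 0) ∘ₗ p
  | ⟨i+2, h⟩ => f ⟨i+1, by omega⟩

theorem ker_comp_inj {A B C : ModuleCat.{0} S} (f : ↥A →ₗ[S] ↥B) (g : ↥B →ₗ[S] ↥C)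
    (hg : Function.Injective g) : LinearMap.ker (g ∘ₗ f) = LinearMap.ker f := by
  rw [LinearMap.ker_comp, LinearMap.ker_eq_bot.mpr hg]
  rfl

theorem range_comp_surj {A B C : ModuleCat.{0} S} (f : ↥A →ₗ[S] ↥B) (g : ↥B →ₗ[S] ↥C)
    (hf : Function.Surjective f) : LinearMap.range (g ∘ₗ f) = LinearMap.range g := by
  rw [LinearMap.range_comp, LinearMap.range_eq_top.mpr hf, Submodule.map_top]

theorem CoRes.seq {C : ModuleCat.{0} S → Prop} {d : ℕ} {M : ModuleCat.{0} S} (h : CoRes C d M) :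
    ∃ (N : Fin (d + 2) → ModuleCat.{0} S)
      (f : ∀ i : Fin (d + 1), ↥(N i.castSucc) →ₗ[S] ↥(N i.succ)),
      IsExactSeq S d N f ∧ N 0 = M ∧ ∀ i : Fin (d + 1), C (N i.succ) := by
  induction d generalizing M with
  | zero =>
    refine ⟨fun _ => M, fun _ => LinearMap.id, ⟨fun _ _ h => h, fun x => ⟨x, rfl⟩,
      fun i => i.elim0⟩, rfl, fun _ => h⟩
  | succ d ih =>
    obtain ⟨I, K, ⟨j, p, hj, hp, hjp⟩, hI, hK⟩ := h
    obtain ⟨N, f, ⟨hf0, hfl, hfe⟩, rfl, hN⟩ := ih hK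
    refine ⟨spN M I N, spF f j p, ⟨hj, ?_, ?_⟩, rfl, ?_⟩
    · cases d with
      | zero => exact hfl.comp hp
      | succ d => exact hfl
    · rintro ⟨i, hi⟩
      match i, hi with
      | 0, hi =>
        change LinearMap.range j = LinearMap.ker (f 0 ∘ₗ p)
        exact hjp.trans (ker_comp_inj _ _ hf0).symm
      | 1, hi =>
        change LinearMap.range (f 0 ∘ₗ p) = LinearMap.ker (f ⟨1, by omega⟩)
        exact (range_comp_surj _ _ hp).trans (hfe ⟨0, by omega⟩)
      | i+2, hi => exact hfe ⟨i+1, by omega⟩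
    · rintro ⟨i, hi⟩
      match i, hi with
      | 0, hi => exact hI
      | i+1, hi => exact hN ⟨i, by omega⟩

theorem costdFilt_EV {Q : QHData S Λ} {N : ModuleCat.{0} S} (h : InCostdFilt S Q N) (lam : Λ)
    (i : ℕ) : EV (Q.std lam) N (i+1) := by
  obtain ⟨n, f, g, hF⟩ := h
  have h1 := Filt.of_chain (X := Q.costd) (T := Set.univ) hF (Fin.last n) (fun _ _ => trivial)
  have h2 : Filt Q.costd Set.univ N :=
    h1.congr ((LinearEquiv.ofEq _ _ hF.2.2.1).trans Submodule.topEquiv)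
  exact Filt.EV_right (fun l _ => ext_std_costd lam l i) h2

theorem GfdLE_EV {Q : QHData S Λ} {M : ModuleCat.{0} S} {d : ℕ} (h : GfdLE S Q M d) (lam : Λ)
    (i : ℕ) : EV (Q.std lam) M (d+i+1) := by
  obtain ⟨N, f, ⟨hf0, hfl, hfe⟩, rfl, hN⟩ := h
  have key : ∀ (m : ℕ) (j : Fin (d+1)), j.1 + m = d → ∀ i,
      EV (Q.std lam) (ModuleCat.of S ↥(LinearMap.range (f j))) (m+i+1) := by
    intro m
    induction m with
    | zero =>
      intro j hj i
      have : j = Fin.last d := Fin.ext (by simpa using hj)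
      subst this
      have h1 := costdFilt_EV (hN (Fin.last d)) lam i
      rw [Nat.zero_add]
      exact h1.congr_right ((LinearEquiv.ofEq _ _ (LinearMap.range_eq_top.mpr hfl)).trans
        Submodule.topEquiv).symm
    | succ m ih =>
      intro j hj i
      have h1 := ih ⟨j.1+1, by omega⟩ (by simp only; omega) i
      have h2 := hfe ⟨j.1, by omega⟩
      have h3 : LinearMap.range (f j) = LinearMap.ker (f ⟨j.1+1, by omega⟩) := h2
      have hS : SES (ModuleCat.of S ↥(LinearMap.range (f j))) (N j.succ)
          (ModuleCat.of S ↥(LinearMap.range (f ⟨j.1+1, by omega⟩))) := by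
        refine ⟨(LinearMap.range (f j)).subtype, (f ⟨j.1+1, by omega⟩).rangeRestrict,
          (LinearMap.range (f j)).injective_subtype, LinearMap.surjective_rangeRestrict _, ?_⟩
        rw [LinearMap.ker_rangeRestrict, Submodule.range_subtype]
        exact h3
      have h4 := costdFilt_EV (hN j) lam (m+i+1)
      have := EV.coleft hS h1 h4
      rwa [show m + 1 + i + 1 = m + i + 1 + 1 by omega]
  have := key d 0 (by simp) i
  exact this.congr_right (LinearEquiv.ofInjective (f 0) hf0).symm

end QHProof


namespace QHProof
open QHPaper

variable {S : Type} [Ring S] {Λ : Type} [Fintype Λ] [PartialOrder Λ] {Q : QHData S Λ}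

theorem D_zero (D : Duality S Q) {A B : ModuleCat.{0} S} (hA : Module.Finite S ↥A)
    (hB : Module.Finite S ↥B) : D.Dmap (0 : ↥A →ₗ[S] ↥B) = 0 := by
  have := D.Dadd hA hB 0 0
  rw [add_zero] at this
  simpa using this

theorem D_sub (D : Duality S Q) {A : ModuleCat.{0} S} (h : Subsingleton ↥A) :
    Subsingleton ↥(D.D A) := by
  have hA : Module.Finite S ↥A := inferInstance
  have h1 := D.Did A hA
  have h2 : (LinearMap.id : ↥A →ₗ[S] ↥A) = 0 := by ext x; exact Subsingleton.elim _ _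
  rw [h2, D_zero D hA hA] at h1
  refine ⟨fun x y => ?_⟩
  have hx := LinearMap.congr_fun h1 x
  have hy := LinearMap.congr_fun h1 y
  simp at hx hy
  rw [← hx, ← hy]

theorem D_SES (D : Duality S Q) {A B C : ModuleCat.{0} S} (hA : Module.Finite S ↥A)
    (hB : Module.Finite S ↥B) (hC : Module.Finite S ↥C) (h : SES A B C) :
    SES (D.D C) (D.D B) (D.D A) := by
  obtain ⟨f, g, hf, hg, hfg⟩ := h
  exact ⟨D.Dmap g, D.Dmap f, D.Dexact hA hB hC f g hf hg hfg⟩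

theorem D_surj (D : Duality S Q) {A B : ModuleCat.{0} S} (hA : Module.Finite S ↥A)
    (hB : Module.Finite S ↥B) (f : ↥A →ₗ[S] ↥B) (hf : Function.Injective f) :
    Function.Surjective (D.Dmap f) :=
  (D.Dexact (C := ModuleCat.of S (↥B ⧸ LinearMap.range f)) hA hB
    (by change Module.Finite S (↥B ⧸ LinearMap.range f); infer_instance) f
    (LinearMap.range f).mkQ hf (Submodule.mkQ_surjective _) (by simp)).2.1

theorem D_inj [IsNoetherianRing S] (D : Duality S Q) {A B : ModuleCat.{0} S}
    (hA : Module.Finite S ↥A)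
    (hB : Module.Finite S ↥B) (f : ↥A →ₗ[S] ↥B) (hf : Function.Surjective f) :
    Function.Injective (D.Dmap f) :=
  (D.Dexact (A := ModuleCat.of S ↥(LinearMap.ker f))
    (by change Module.Finite S ↥(LinearMap.ker f); infer_instance) hA hB
    (LinearMap.ker f).subtype f (Submodule.injective_subtype _) hf (by simp)).1

theorem inj_of_D_surj [IsNoetherianRing S] (D : Duality S Q) {A B : ModuleCat.{0} S}
    (hA : Module.Finite S ↥A)
    (hB : Module.Finite S ↥B) (f : ↥A →ₗ[S] ↥B) (hf : Function.Surjective (D.Dmap f)) :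
    Function.Injective f := by
  have hK : Module.Finite S ↥(ModuleCat.of S ↥(LinearMap.ker f)) := by
    change Module.Finite S ↥(LinearMap.ker f); infer_instance
  let i : ↥(ModuleCat.of S ↥(LinearMap.ker f)) →ₗ[S] ↥A := (LinearMap.ker f).subtype
  have h0 : f ∘ₗ i = 0 := by
    refine LinearMap.ext fun x => ?_
    exact x.2
  have h1 := D.Dcomp hK hA hB i f
  rw [h0, D_zero D hK hB] at h1
  have h2 : D.Dmap i = 0 := by
    refine LinearMap.ext fun x => ?_
    obtain ⟨y, rfl⟩ := hf x
    exact (LinearMap.congr_fun h1 y).symm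
  have h3 : i = 0 := (D.Dfull hK hA).1 (h2.trans (D_zero D hK hA).symm)
  rw [← LinearMap.ker_eq_bot, eq_bot_iff]
  intro x hx
  exact LinearMap.congr_fun h3 ⟨x, hx⟩

theorem D_proj [IsNoetherianRing S] (D : Duality S Q) {P : ModuleCat.{0} S} (h : FinProj P) :
    Module.Injective S ↥(D.D P) := by
  obtain ⟨hf, hp⟩ := h
  apply Module.Baer.injective
  intro J g
  have hJ : Module.Finite S ↥(ModuleCat.of S ↥J) := by
    change Module.Finite S ↥J; infer_instance
  have hS : Module.Finite S ↥(ModuleCat.of S S) := by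
    change Module.Finite S S; infer_instance
  have hDP := D.finD P hf
  let i : ↥(ModuleCat.of S ↥J) →ₗ[S] ↥(ModuleCat.of S S) := J.subtype
  let g' : ↥(ModuleCat.of S ↥J) →ₗ[S] ↥(D.D P) := g
  obtain ⟨e⟩ := D.Dinvol P hf
  have : Module.Projective S ↥(D.D (D.D P)) := Module.Projective.of_equiv e.symm
  obtain ⟨l, hl⟩ := Module.projective_lifting_property (D.Dmap i) (D.Dmap g')
    (D_surj D hJ hS i J.injective_subtype)
  obtain ⟨m, hm⟩ := (D.Dfull hS hDP).2 l
  change D.Dmap m = l at hm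
  have : m ∘ₗ i = g' := by
    apply (D.Dfull hJ hDP).1
    change D.Dmap (m ∘ₗ i) = D.Dmap g'
    rw [D.Dcomp hJ hS hDP, hm, hl]
  exact ⟨m, fun x hx => LinearMap.congr_fun this ⟨x, hx⟩⟩

theorem PNZ_D [IsNoetherianRing S] (D : Duality S Q) {M : ModuleCat.{0} S}
    (hM : Module.Finite S ↥M) {mu : Λ} (h : PNZ Q mu (D.D M)) : PNZ Q mu M := by
  obtain ⟨B, p, hp⟩ := h.subquot
  have hDM := D.finD M hM
  have hB : Module.Finite S ↥(ModuleCat.of S ↥B) := by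
    change Module.Finite S ↥B; infer_instance
  obtain ⟨e⟩ := D.DL mu
  obtain ⟨e'⟩ := D.Dinvol M hM
  have h1 : PNZ Q mu (D.D (ModuleCat.of S ↥B)) :=
    ((PNZ_L mu).of_inj e.symm.toLinearMap e.symm.injective).of_inj
      (D.Dmap (A := ModuleCat.of S ↥B) p) (D_inj D hB (Q.finiteL mu) p hp)
  have h2 : PNZ Q mu (D.D (D.D M)) :=
    h1.of_surj (D.Dmap (A := ModuleCat.of S ↥B) B.subtype)
      (D_surj D hB hDM _ B.injective_subtype)
  exact h2.of_inj e'.toLinearMap e'.injective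

theorem D_std [IsNoetherianRing S] [IsArtinianRing S] (D : Duality S Q) (lam : Λ) :
    Nonempty (↥(D.D (Q.std lam)) ≃ₗ[S] ↥(Q.costd lam)) := by
  obtain ⟨hPp, π, hπs, hπ⟩ := Q.projCover lam
  have hPf := P_finite (Q := Q) lam
  have hLf := Q.finiteL lam
  have hDPf := D.finD _ hPf
  have hDPi := D_proj D ⟨hPf, hPp⟩
  obtain ⟨e⟩ := D.DL lam
  obtain ⟨φ⟩ := D.Dinvol _ hPf
  let j : ↥(Q.L lam) →ₗ[S] ↥(D.D (Q.P lam)) := D.Dmap π ∘ₗ e.symm.toLinearMap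
  have hj : Function.Injective j := (D_inj D hPf hLf π hπs).comp e.symm.injective
  obtain ⟨hIi, ι, hι, hess⟩ := Q.injHull lam
  obtain ⟨a, ha⟩ := hIi.out j hj ι
  obtain ⟨b, hb⟩ := hDPi.out ι hι j
  have hbi : Function.Injective b := by
    rw [← LinearMap.ker_eq_bot]
    apply hess
    rw [eq_bot_iff]
    rintro _ ⟨hx, ⟨y, rfl⟩⟩
    have h1 : b (ι y) = 0 := hx
    rw [hb] at h1
    have : y = 0 := hj (by rw [h1, map_zero])
    simp [this]
  have hIf : Module.Finite S ↥(Q.I lam) := Module.Finite.of_injective b hbi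
  have hai : Function.Injective a := by
    apply inj_of_D_surj D hDPf hIf
    have hj1 : Function.Surjective (D.Dmap j) := D_surj D hLf hDPf j hj
    have hL : Nontrivial ↥(D.D (Q.L lam)) := by
      have := Q.simpleL lam
      have : Nontrivial ↥(Q.L lam) := IsSimpleModule.nontrivial S _
      exact e.toEquiv.nontrivial
    have hne : D.Dmap j ∘ₗ φ.symm.toLinearMap ≠ 0 := by
      intro h0
      obtain ⟨x, hx⟩ := exists_ne (0 : ↥(D.D (Q.L lam)))
      obtain ⟨y, rfl⟩ := hj1 x
      apply hx
      have := LinearMap.congr_fun h0 (φ y)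
      simpa using this
    have hker := ker_le hne hπs hπ
    have hcomp : D.Dmap j ∘ₗ D.Dmap a = D.Dmap ι := by
      rw [← D.Dcomp hLf hDPf hIf]
      congr 1
      exact LinearMap.ext ha
    have htop : LinearMap.range (φ.toLinearMap ∘ₗ D.Dmap a) = ⊤ := by
      apply hπ
      rw [eq_top_iff]
      intro x _
      obtain ⟨y, hy⟩ := D_surj D hLf hIf ι hι (D.Dmap j (φ.symm x))
      rw [← hcomp] at hy
      rw [← add_sub_cancel (φ (D.Dmap a y)) x]
      refine Submodule.add_mem_sup ⟨y, rfl⟩ (hker ?_)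
      rw [LinearMap.mem_ker]
      simp only [LinearMap.comp_apply] at hy
      simp [hy]
    intro x
    have : φ x ∈ LinearMap.range (φ.toLinearMap ∘ₗ D.Dmap a) := by rw [htop]; trivial
    obtain ⟨y, hy⟩ := this
    exact ⟨y, φ.injective hy⟩
  obtain ⟨V, ⟨eV⟩, hV1, hV2⟩ := costd_spec (Q := Q) lam
  have hVf : Module.Finite S ↥(ModuleCat.of S ↥V) := by
    change Module.Finite S ↥V; infer_instance
  obtain ⟨q, hq, hq1, hq2⟩ := std_quot (Q := Q) lam
  have hsf := std_finite (Q := Q) lam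
  let w : ↥(D.D (Q.std lam)) →ₗ[S] ↥(Q.I lam) := a ∘ₗ D.Dmap q
  have hw : Function.Injective w := hai.comp (D_inj D hPf hsf q hq)
  have hwV : LinearMap.range w ≤ V := by
    apply hV2
    intro mu hmu
    apply hq1
    apply PNZ_D D hsf
    exact hmu.of_inj (N := D.D (Q.std lam)) (LinearEquiv.ofInjective w hw).symm.toLinearMap
      (LinearEquiv.ofInjective w hw).symm.injective
  let c : ↥(D.D (Q.std lam)) →ₗ[S] ↥V := LinearMap.codRestrict V w (fun x => hwV ⟨x, rfl⟩)
  have hc : Function.Injective c := fun x y h => hw (congrArg Subtype.val h)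
  let v : ↥(ModuleCat.of S ↥V) →ₗ[S] ↥(D.D (Q.P lam)) := b ∘ₗ V.subtype
  have hv : Function.Injective v := hbi.comp V.injective_subtype
  let r : ↥(Q.P lam) →ₗ[S] ↥(D.D (ModuleCat.of S ↥V)) := D.Dmap v ∘ₗ φ.symm.toLinearMap
  have hr : Function.Surjective r := (D_surj D hVf hDPf v hv).comp φ.symm.surjective
  have hqr : LinearMap.ker q ≤ LinearMap.ker r := by
    apply hq2
    intro mu hmu
    apply hV1
    apply PNZ_D D hVf
    exact hmu.of_inj (r.quotKerEquivOfSurjective hr).toLinearMap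
      (r.quotKerEquivOfSurjective hr).injective
  let t : ↥(Q.std lam) →ₗ[S] ↥(D.D (ModuleCat.of S ↥V)) :=
    (Submodule.liftQ _ r hqr) ∘ₗ (q.quotKerEquivOfSurjective hq).symm.toLinearMap
  have htr : ∀ x, t (q x) = r x := by
    intro x
    have : (q.quotKerEquivOfSurjective hq).symm (q x) = Submodule.Quotient.mk x := by
      rw [LinearEquiv.symm_apply_eq]; rfl
    change Submodule.liftQ _ r hqr ((q.quotKerEquivOfSurjective hq).symm (q x)) = _
    rw [this]
    exact Submodule.liftQ_apply _ _ _
  have ht : Function.Surjective t := fun x => by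
    obtain ⟨y, rfl⟩ := hr x
    exact ⟨q y, htr y⟩
  obtain ⟨ψ⟩ := D.Dinvol _ hVf
  change _ ≃ₗ[S] ↥V at ψ
  let u : ↥V →ₗ[S] ↥(D.D (Q.std lam)) := D.Dmap t ∘ₗ ψ.symm.toLinearMap
  have hu : Function.Injective u := (D_inj D hsf (D.finD _ hVf) t ht).comp ψ.symm.injective
  have hcu : Function.Surjective (c ∘ₗ u) :=
    IsArtinian.surjective_of_injective_endomorphism (c ∘ₗ u) (hc.comp hu)
  have hcs : Function.Surjective c := fun x => by
    obtain ⟨y, hy⟩ := hcu x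
    exact ⟨u y, hy⟩
  exact ⟨(LinearEquiv.ofBijective c ⟨hc, hcs⟩).trans eV.symm⟩

theorem D_filt [IsNoetherianRing S] [IsArtinianRing S] (D : Duality S Q) {M : ModuleCat.{0} S}
    (h : Filt Q.std Set.univ M) : Filt Q.costd Set.univ (D.D M) := by
  induction h with
  | zero M h => exact .zero _ (D_sub D h)
  | ext A M lam _ hA hS ih =>
    have hAf := hA.finite (std_finite (Q := Q))
    have hsf := std_finite (Q := Q) lam
    have hMf := hS.finite_mid hAf hsf
    obtain ⟨e⟩ := D_std D lam
    exact Filt.extn ((Filt.single (X := Q.costd) (T := Set.univ) lam trivial).congr e.symm) ih (D_SES D hAf hMf hsf hS)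

theorem D_res [IsNoetherianRing S] (D : Duality S Q) {C C' : ModuleCat.{0} S → Prop}
    (hC : ∀ M, C M → Module.Finite S ↥M ∧ C' (D.D M)) {d : ℕ} {X : ModuleCat.{0} S}
    (hX : Module.Finite S ↥X) (h : Res C d X) : CoRes C' d (D.D X) := by
  induction d generalizing X with
  | zero => exact (hC _ h).2
  | succ d ih =>
    obtain ⟨K, P, hS, hP, hK⟩ := h
    have hPf := (hC _ hP).1
    have hKf := hS.finite_left hPf
    exact ⟨_, _, D_SES D hKf hPf hX hS, (hC _ hP).2, ih hKf hK⟩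

theorem gfd_bound [IsNoetherianRing S] [IsArtinianRing S] (D : Duality S Q) :
    ∃ n, ∀ M : ModuleCat.{0} S, Module.Finite S ↥M → GfdLE S Q M n := by
  obtain ⟨n, hn⟩ := glob Q
  refine ⟨n, fun M hM => ?_⟩
  have hDM := D.finD M hM
  have h1 : Res FinProj n (D.D M) :=
    res_of_EV n _ hDM fun Y _ => hn _ hDM Y (n+1) (by omega)
  have h2 : CoRes (Filt Q.costd Set.univ) n (D.D (D.D M)) :=
    D_res D (fun P hP => ⟨hP.1, D_filt D (proj_filt P hP.1 hP.2)⟩) hDM h1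
  obtain ⟨e⟩ := D.Dinvol M hM
  obtain ⟨N, f, hN, h0, hF⟩ := (h2.congr (fun A B e h => h.congr e) e).seq
  exact ⟨N, f, hN, h0, fun i => (hF i).to_chain⟩

theorem inj_congr {A B : ModuleCat.{0} S} (e : ↥A ≃ₗ[S] ↥B) (h : Module.Injective S ↥A) :
    Module.Injective S ↥B := by
  refine ⟨fun X Y _ _ _ _ f hf g => ?_⟩
  obtain ⟨h', hh⟩ := h.out f hf (e.symm.toLinearMap ∘ₗ g)
  refine ⟨e.toLinearMap ∘ₗ h', fun x => ?_⟩
  simp [hh]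

theorem injdim_le [IsNoetherianRing S] [IsArtinianRing S] (D : Duality S Q) (lam : Λ) :
    injdim S (Q.costd lam) ≤ gfdAlg S Q := by
  obtain ⟨n, hn⟩ := gfd_bound D
  have hbdd : BddAbove {d | ∃ M : ModuleCat.{0} S, Module.Finite S ↥M ∧ gfd S Q M = d} := by
    refine ⟨n, ?_⟩
    rintro _ ⟨M, hM, rfl⟩
    exact Nat.sInf_le (hn M hM)
  have hEV : ∀ Y : ModuleCat.{0} S, Module.Finite S ↥Y → EV (Q.std lam) Y (gfdAlg S Q + 1) := by
    intro Y hY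
    have h1 : GfdLE S Q Y (gfd S Q Y) :=
      Nat.sInf_mem (s := {d | GfdLE S Q Y d}) ⟨n, hn Y hY⟩
    have h2 : gfd S Q Y ≤ gfdAlg S Q := le_csSup hbdd ⟨Y, hY, rfl⟩
    have h3 := GfdLE_EV h1 lam (gfdAlg S Q - gfd S Q Y)
    rwa [Nat.add_sub_cancel' h2] at h3
  have hsf := std_finite (Q := Q) lam
  have h1 := res_of_EV _ _ hsf hEV
  have h2 : CoRes (fun M => Module.Injective S ↥M) (gfdAlg S Q) (D.D (Q.std lam)) :=
    D_res D (fun P hP => ⟨hP.1, D_proj D hP⟩) hsf h1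
  obtain ⟨e⟩ := D_std D lam
  exact Nat.sInf_le ((h2.congr (fun A B e h => inj_congr e h) e).seq)

end QHProof

open QHPaper in
/-- Let `S` be a connected quasi-hereditary algebra with a simple-preserving
duality whose partial order is minimal for the quasi-hereditary structure. If `S` satisfies
property C, then property B holds if and only if property E holds. -/
theorem stmt17 (k S Λ : Type) [Field k] [Ring S] [Algebra k S] [FiniteDimensional k S]
    [Fintype Λ] [PartialOrder Λ]
    (hconn : ConnectedRing S)
    (QH : QHData S Λ) (dual : Duality S QH) (hmin : MinimalOrder S QH)
    (hC : PropC S QH) :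
    PropB S QH ↔ PropE S QH := by
  have : IsNoetherianRing S := IsNoetherianRing.of_finite k S
  have : IsArtinianRing S := IsArtinianRing.of_finite k S
  constructor
  · intro h mu lam hlt
    have h1 := h mu lam hlt
    rw [hC mu, hC lam] at h1
    have h2 := QHProof.injdim_le dual mu
    have h3 := QHProof.injdim_le dual lam
    omega
  · intro h mu lam hlt
    have h1 := h mu lam hlt
    rw [hC mu, hC lam]
    omega
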